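/- arXiv:2004.12518 — 2 statements merged into one kernel-verified Lean document; each statement's English description precedes it below -/
import Mathlib

section
/- For every α, d ∈ (0,1] there exist an integer n₀ and a real ρ > 0 such that the following holds for all n ≥ n₀: if H is an n-vertex (ρ,d)-cherry-dense 3-graph satisfying δ₁(H) ≥ α·C(n,2), then H contains a tight Hamilton cycle. -/
/-!
The proof is an absorption argument. Write `extn H X x y` for the number of pairs `(a, b)` of
vertices outside `X` such that `xya` and `yab` are edges: the two-step continuations of the pair
`(x, y)` avoiding `X`.

*Consequences of cherry-density.* For any relation `G`, all but few of the pairs `(y, z)` for which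
`y` has a linear number of `G`-in-neighbours lie in linearly many edges `xyz` with `(x, y) ∈ G`
(`cherry_bad`). Hence, for every set `X` leaving linearly many vertices, all but few pairs have
quadratically many continuations outside `X` (`most_good`), and two pairs with quadratically many
continuations outside `X` are joined by a tight path whose four inner vertices avoid `X`
(`connect`).

*Absorbers.* A quadruple `(a, b, c, e)` absorbs `v` if both `abce` and `abvce` are tight paths; the
end pairs are also required to be good, that is, to have many continuations. The link graph of `v`
has at least `α C(n,2)` edges, which by cherry-density gives `Ω(n⁴)` absorbers of each vertex
(`abs_count`). Give `v` the weight `(1/2) ^ (number of chosen absorbers of v)`. By averaging, some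
quadruple disjoint from the path built so far absorbs a positive proportion of the total weight; it
is connected to the path. The total weight decays geometrically, so that a short
path carries linearly many disjoint absorbers of every vertex (`absorbing_path`).

*Covering.* The path is then prolonged alternately at its two ends. Whenever linearly many vertices
are uncovered, some pair has many continuations among them in both orientations (`pick`); joining
such a pair to the end of the path while the end pairs keep many continuations in the
uncovered part makes a reservoir unnecessary (`cover`). Once fewer than `κ n` vertices remain, the
path is closed to a tight cycle, and the remaining vertices are inserted one at a time, each into
an absorber of its own (`absorb_all`).
-/

open Finset

/-- An `n`-vertex 3-graph `H` is `(ρ,d)`-cherry-dense if for all sets of ordered pairs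
`G₁, G₂ ⊆ V × V`, the number of cherries `(x,y,z)` with `(x,y) ∈ G₁`, `(y,z) ∈ G₂` and
`{x,y,z} ∈ E(H)` is at least `d·|P₂(G₁,G₂)| − ρn³`. -/
def CherryDense (n : ℕ) (H : Finset (Finset (Fin n))) (ρ d : ℝ) : Prop :=
  ∀ G₁ G₂ : Finset (Fin n × Fin n),
    ((((Finset.univ : Finset (Fin n × Fin n × Fin n)).filter fun t =>
          (t.1, t.2.1) ∈ G₁ ∧ (t.2.1, t.2.2) ∈ G₂).filter fun t =>
          ({t.1, t.2.1, t.2.2} : Finset (Fin n)) ∈ H).card : ℝ) ≥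
      d * (((Finset.univ : Finset (Fin n × Fin n × Fin n)).filter fun t =>
          (t.1, t.2.1) ∈ G₁ ∧ (t.2.1, t.2.2) ∈ G₂).card : ℝ) - ρ * (n : ℝ) ^ 3

/-- The vertex degree `deg_H(v)`: the number of edges of `H` containing `v`. -/
def vdeg (n : ℕ) (H : Finset (Finset (Fin n))) (v : Fin n) : ℕ :=
  (H.filter fun e => v ∈ e).card

/-- The codegree `deg_H(xy)`: the number of edges of `H` containing both `x` and `y`. -/
def codeg (n : ℕ) (H : Finset (Finset (Fin n))) (x y : Fin n) : ℕ :=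
  (H.filter fun e => x ∈ e ∧ y ∈ e).card

/-- The codegree of an (unordered) pair `S`: the number of edges of `H` containing `S`. -/
def pairDeg (n : ℕ) (H : Finset (Finset (Fin n))) (S : Finset (Fin n)) : ℕ :=
  (H.filter fun e => S ⊆ e).card

/-- `H` has a tight Hamilton cycle: a cyclic ordering of all `n` vertices such that
every 3 consecutive vertices form an edge. -/
def HasTightHamCycle (n : ℕ) (H : Finset (Finset (Fin n))) : Prop :=
  ∃ f : ZMod n → Fin n, Function.Bijective f ∧
    ∀ i : ZMod n, ({f i, f (i + 1), f (i + 2)} : Finset (Fin n)) ∈ H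


namespace CherryHam

/-! ### Counting -/

open Classical in
/-- The number of `x` with `P x`, as a real number. -/
noncomputable def cnt {α : Type*} [Fintype α] (P : α → Prop) : ℝ :=
  ((Finset.univ.filter P).card : ℝ)

section Counting

variable {α β : Type*} [Fintype α] [Fintype β]

lemma cnt_eq_card (P : α → Prop) [DecidablePred P] :
    cnt P = ((Finset.univ.filter P).card : ℝ) := by
  unfold cnt
  congr!

open Classical in
lemma cnt_eq_sum (P : α → Prop) : cnt P = ∑ x, if P x then (1 : ℝ) else 0 := by
  rw [cnt_eq_card]
  simp

lemma cnt_nonneg (P : α → Prop) : 0 ≤ cnt P := by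
  unfold cnt
  positivity

lemma cnt_mono {P Q : α → Prop} (h : ∀ x, P x → Q x) : cnt P ≤ cnt Q := by
  classical
  rw [cnt_eq_card, cnt_eq_card]
  exact_mod_cast Finset.card_le_card (Finset.monotone_filter_right _ fun x _ => h x)

lemma cnt_congr {P Q : α → Prop} (h : ∀ x, P x ↔ Q x) : cnt P = cnt Q := by
  rw [show P = Q from funext fun x => propext (h x)]

lemma cnt_le_add {P Q R : α → Prop} (h : ∀ x, P x → Q x ∨ R x) : cnt P ≤ cnt Q + cnt R := by
  classical
  rw [cnt_eq_card, cnt_eq_card, cnt_eq_card]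
  norm_cast
  refine le_trans (Finset.card_le_card ?_) (Finset.card_union_le _ _)
  intro x hx
  simp only [Finset.mem_filter, Finset.mem_univ, true_and, Finset.mem_union] at hx ⊢
  exact h x hx

lemma exists_of_cnt_pos {P : α → Prop} (h : 0 < cnt P) : ∃ x, P x := by
  by_contra hc
  push Not at hc
  have : cnt P = 0 := by
    rw [cnt_eq_sum]
    simp [hc]
  linarith

/-- If there are more points satisfying `P` than points satisfying `Q`, some point satisfies `P`
but not `Q`. -/
lemma exists_of_cnt_lt {P Q : α → Prop} (h : cnt Q < cnt P) : ∃ x, P x ∧ ¬ Q x := by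
  by_contra hc
  push Not at hc
  exact absurd (cnt_mono hc) (not_le.mpr h)

lemma cnt_eq_le_one (a : α) : cnt (fun x => x = a) = 1 := by
  classical
  rw [cnt_eq_sum]
  simp

lemma cnt_mem (X : Finset α) : cnt (fun x => x ∈ X) = X.card := by
  classical
  rw [cnt_eq_card]
  simp

lemma cnt_not_mem (X : Finset α) : cnt (fun x => x ∉ X) = Fintype.card α - X.card := by
  classical
  rw [cnt_eq_card]
  have : (Finset.univ.filter fun x => x ∉ X) = Xᶜ := by ext; simp
  rw [this, Finset.card_compl, Nat.cast_sub (Finset.card_le_univ X)]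

lemma cnt_le_card (P : α → Prop) : cnt P ≤ Fintype.card α := by
  classical
  rw [cnt_eq_card]
  exact_mod_cast Finset.card_le_univ _

lemma cnt_prod (Q : α → β → Prop) :
    cnt (fun p : α × β => Q p.1 p.2) = ∑ a, cnt (Q a) := by
  classical
  simp only [cnt_eq_sum, Fintype.sum_prod_type]

lemma cnt_prod' (Q : α → β → Prop) :
    cnt (fun p : α × β => Q p.1 p.2) = ∑ b, cnt (fun a => Q a b) := by
  classical
  simp only [cnt_eq_sum, Fintype.sum_prod_type]
  exact Finset.sum_comm

lemma cnt_swap (Q : α → β → Prop) :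
    cnt (fun p : α × β => Q p.1 p.2) = cnt (fun p : β × α => Q p.2 p.1) := by
  rw [cnt_prod, cnt_prod' (fun b a => Q a b)]

lemma cnt_rect (A : α → Prop) (B : β → Prop) :
    cnt (fun p : α × β => A p.1 ∧ B p.2) = cnt A * cnt B := by
  classical
  rw [cnt_prod (fun a b => A a ∧ B b), cnt_eq_sum A, Finset.sum_mul]
  refine Finset.sum_congr rfl fun a _ => ?_
  by_cases h : A a <;> simp [h, cnt_eq_sum]

lemma mul_le_cnt_prod {A : α → Prop} {Q : α → β → Prop} {t : ℝ}
    (h : ∀ a, A a → t ≤ cnt (Q a)) : cnt A * t ≤ cnt (fun p : α × β => Q p.1 p.2) := by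
  classical
  rw [cnt_prod, cnt_eq_sum, Finset.sum_mul]
  refine Finset.sum_le_sum fun a _ => ?_
  by_cases ha : A a
  · simpa [ha] using h a ha
  · simpa [ha] using cnt_nonneg (Q a)

lemma cnt_prod_le_mul {A : α → Prop} {Q : α → β → Prop} {t : ℝ}
    (h : ∀ a, A a → cnt (Q a) ≤ t) :
    cnt (fun p : α × β => A p.1 ∧ Q p.1 p.2) ≤ cnt A * t := by
  classical
  rw [cnt_prod (fun a b => A a ∧ Q a b), cnt_eq_sum, Finset.sum_mul]
  refine Finset.sum_le_sum fun a _ => ?_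
  by_cases ha : A a
  · simpa [ha] using h a ha
  · simp [ha, cnt_eq_sum]

/-- A relation with at least `γn²` pairs has at least `γn/2` points of in-degree at least
`γn/2`. -/
lemma cnt_rich {n : ℕ} (hn : 0 < n) {γ : ℝ} (hγ : 0 ≤ γ) {Q : Fin n → Fin n → Prop}
    (h : γ * n ^ 2 ≤ cnt (fun p : Fin n × Fin n => Q p.1 p.2)) :
    γ / 2 * n ≤ cnt (fun b => γ / 2 * n ≤ cnt (fun a => Q a b)) := by
  classical
  have hn' : (0 : ℝ) < n := by exact_mod_cast hn
  have h1 : cnt (fun p : Fin n × Fin n => Q p.1 p.2) ≤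
      cnt (fun b => γ / 2 * n ≤ cnt (fun a => Q a b)) * n + γ / 2 * n * n := by
    rw [cnt_prod', cnt_eq_sum, Finset.sum_mul]
    have h2 : γ / 2 * n * n = ∑ _b : Fin n, γ / 2 * n := by
      simp; ring
    rw [h2, ← Finset.sum_add_distrib]
    refine Finset.sum_le_sum fun b _ => ?_
    have h3 := cnt_le_card (fun a => Q a b)
    simp only [Fintype.card_fin] at h3
    by_cases hb : γ / 2 * n ≤ cnt (fun a => Q a b)
    · simp only [hb, if_true]
      nlinarith [mul_nonneg hγ hn'.le]
    · simp only [hb, if_false]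
      linarith
  have h4 : γ / 2 * n * n ≤ cnt (fun b => γ / 2 * n ≤ cnt (fun a => Q a b)) * n := by
    nlinarith
  exact le_of_mul_le_mul_right h4 hn'

end Counting

/-! ### Edges and extensions -/

/-- `{x, y, z}` is an edge of `H`. -/
def E {n : ℕ} (H : Finset (Finset (Fin n))) (x y z : Fin n) : Prop :=
  ({x, y, z} : Finset (Fin n)) ∈ H

section Edge

variable {n : ℕ} {H : Finset (Finset (Fin n))}

lemma E.rev {x y z : Fin n} (h : E H x y z) : E H z y x := by
  unfold E at *
  rwa [show ({z, y, x} : Finset (Fin n)) = {x, y, z} by ext; simp; tauto]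

lemma E.swap {x y z : Fin n} (h : E H x y z) : E H y x z := by
  unfold E at *
  rwa [show ({y, x, z} : Finset (Fin n)) = {x, y, z} by ext; simp; tauto]

lemma E.swap' {x y z : Fin n} (h : E H x y z) : E H x z y :=
  h.rev.swap.rev

lemma E.ne (hH : ∀ e ∈ H, e.card = 3) {x y z : Fin n} (h : E H x y z) :
    x ≠ y ∧ x ≠ z ∧ y ≠ z := by
  have := hH _ h
  rw [Finset.card_eq_three] at this
  by_contra hc
  have h2 : ({x, y, z} : Finset (Fin n)).card ≤ 2 := by
    by_cases h1 : x = y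
    · subst h1; simpa using Finset.card_le_two
    · by_cases h2 : x = z
      · subst h2
        rw [show ({x, y, x} : Finset (Fin n)) = {x, y} by ext; simp; tauto]
        exact Finset.card_le_two
      · have h3 : y = z := by tauto
        subst h3; simpa using Finset.card_le_two
  have := hH _ h
  omega

end Edge

lemma cherryDense_mono {n : ℕ} {H : Finset (Finset (Fin n))} {ρ ρ' d : ℝ} (hρ : ρ ≤ ρ')
    (h : CherryDense n H ρ d) : CherryDense n H ρ' d := by
  intro G₁ G₂
  have h1 := h G₁ G₂
  have h2 : ρ * (n : ℝ) ^ 3 ≤ ρ' * (n : ℝ) ^ 3 := by gcongr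
  linarith

/-- The workhorse form of cherry-density: for every relation `G`, all but few pairs `(y, z)` with
`y` of large in-degree in `G` are completed to an edge by many in-neighbours `x` of `y`. -/
lemma cherry_bad {d τ ε : ℝ} (hd : 0 < d) (hτ : 0 < τ) (hε : 0 < ε) :
    ∃ ρ : ℝ, 0 < ρ ∧ ∀ (n : ℕ) (H : Finset (Finset (Fin n))), CherryDense n H ρ d →
      ∀ G : Fin n → Fin n → Prop,
        cnt (fun p : Fin n × Fin n => τ * n ≤ cnt (fun x => G x p.1) ∧
          cnt (fun x => G x p.1 ∧ E H x p.1 p.2) < d * τ / 2 * n) ≤ ε * n ^ 2 := by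
  classical
  refine ⟨ε * d * τ / 2, by positivity, ?_⟩
  intro n H hC G
  rcases Nat.eq_zero_or_pos n with rfl | hn
  · refine (cnt_le_card _).trans ?_
    simp
  have hn' : (0 : ℝ) < n := by exact_mod_cast hn
  set B : Fin n × Fin n → Prop := fun p => τ * n ≤ cnt (fun x => G x p.1) ∧
          cnt (fun x => G x p.1 ∧ E H x p.1 p.2) < d * τ / 2 * n with hB
  have h := hC (Finset.univ.filter fun p => G p.1 p.2) (Finset.univ.filter B)
  rw [Finset.filter_filter, ← cnt_eq_card, ← cnt_eq_card] at h
  simp only [Finset.mem_filter, Finset.mem_univ, true_and] at h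
  have e1 : cnt B * (τ * n) ≤
      cnt (fun t : Fin n × Fin n × Fin n => G t.1 t.2.1 ∧ B (t.2.1, t.2.2)) := by
    rw [cnt_swap (fun (x : Fin n) (p : Fin n × Fin n) => G x p.1 ∧ B (p.1, p.2))]
    refine mul_le_cnt_prod (Q := fun (p : Fin n × Fin n) (x : Fin n) => G x p.1 ∧ B (p.1, p.2)) ?_
    intro p hp
    refine hp.1.trans (cnt_mono fun x hx => ⟨hx, hp⟩)
  have e2 : cnt (fun t : Fin n × Fin n × Fin n => (G t.1 t.2.1 ∧ B (t.2.1, t.2.2)) ∧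
      ({t.1, t.2.1, t.2.2} : Finset (Fin n)) ∈ H) ≤ cnt B * (d * τ / 2 * n) := by
    rw [cnt_swap (fun (x : Fin n) (p : Fin n × Fin n) => (G x p.1 ∧ B (p.1, p.2)) ∧
      ({x, p.1, p.2} : Finset (Fin n)) ∈ H)]
    refine le_trans (cnt_mono ?_) (cnt_prod_le_mul (A := B)
      (Q := fun (p : Fin n × Fin n) (x : Fin n) => G x p.1 ∧ E H x p.1 p.2) ?_)
    · rintro ⟨p, x⟩ ⟨⟨h1, h2⟩, h3⟩
      exact ⟨h2, h1, h3⟩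
    · intro p hp
      exact hp.2.le
  have e3 : d * (cnt B * (τ * n)) - ε * d * τ / 2 * (n : ℝ) ^ 3 ≤ cnt B * (d * τ / 2 * n) := by
    nlinarith
  have e4 : (d * τ / 2 * n) * cnt B ≤ (d * τ / 2 * n) * (ε * n ^ 2) := by nlinarith
  exact le_of_mul_le_mul_left e4 (by positivity)

/-! ### Good pairs and connections -/

/-- The number of ways to continue the pair `(x, y)` by two more vertices `a, b` outside `X`, along
the edges `xya` and `yab`. -/
noncomputable def extn {n : ℕ} (H : Finset (Finset (Fin n))) (X : Finset (Fin n))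
    (x y : Fin n) : ℝ :=
  cnt fun p : Fin n × Fin n => (p.1 ∉ X ∧ p.2 ∉ X) ∧ E H x y p.1 ∧ E H y p.1 p.2

lemma extn_le_add {n : ℕ} {H : Finset (Finset (Fin n))} {X Y : Finset (Fin n)} {k : ℝ}
    (hk : ((Y \ X).card : ℝ) ≤ k) (x y : Fin n) :
    extn H X x y ≤ extn H Y x y + 2 * k * n := by
  classical
  have h1 : extn H X x y ≤ extn H Y x y +
      cnt (fun p : Fin n × Fin n => (p.1 ∈ Y \ X ∧ True) ∨ (True ∧ p.2 ∈ Y \ X)) := by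
    refine cnt_le_add ?_
    rintro ⟨a, b⟩ ⟨⟨h1, h2⟩, h3⟩
    by_cases ha : a ∈ Y
    · exact Or.inr (Or.inl ⟨Finset.mem_sdiff.mpr ⟨ha, h1⟩, trivial⟩)
    by_cases hb : b ∈ Y
    · exact Or.inr (Or.inr ⟨trivial, Finset.mem_sdiff.mpr ⟨hb, h2⟩⟩)
    exact Or.inl ⟨⟨ha, hb⟩, h3⟩
  have h2 : cnt (fun p : Fin n × Fin n => (p.1 ∈ Y \ X ∧ True) ∨ (True ∧ p.2 ∈ Y \ X)) ≤
      cnt (fun p : Fin n × Fin n => p.1 ∈ Y \ X ∧ True) +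
      cnt (fun p : Fin n × Fin n => True ∧ p.2 ∈ Y \ X) := cnt_le_add fun _ h => h
  rw [cnt_rect (fun a => a ∈ Y \ X) (fun _ => True), cnt_rect (fun _ => True) (fun a => a ∈ Y \ X),
    cnt_mem] at h2
  have h3 : cnt (fun _ : Fin n => True) ≤ n := by simpa using cnt_le_card (fun _ : Fin n => True)
  have h4 : 0 ≤ ((Y \ X).card : ℝ) := by positivity
  have h5 : cnt (fun _ : Fin n => True) * ((Y \ X).card : ℝ) ≤ n * k := by
    gcongr
  linarith

/-- If a linear number of vertices lies outside `X`, then all but few pairs can be continued in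
quadratically many ways outside `X`. -/
lemma most_good {d δ ε : ℝ} (hd : 0 < d) (hδ : 0 < δ) (hε : 0 < ε) :
    ∃ ρ : ℝ, 0 < ρ ∧ ∀ (n : ℕ) (H : Finset (Finset (Fin n))), CherryDense n H ρ d →
      ∀ X : Finset (Fin n), δ * n ≤ n - X.card →
        cnt (fun p : Fin n × Fin n => extn H X p.1 p.2 < d ^ 2 * δ ^ 2 / 8 * n ^ 2)
          ≤ ε * n ^ 2 := by
  classical
  obtain ⟨ρ₁, hρ₁, h₁⟩ := cherry_bad hd hδ (show 0 < ε * δ / 4 by positivity)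
  obtain ⟨ρ₂, hρ₂, h₂⟩ := cherry_bad hd (half_pos hδ) (half_pos hε)
  refine ⟨min ρ₁ ρ₂, lt_min hρ₁ hρ₂, ?_⟩
  intro n H hC X hX
  rcases Nat.eq_zero_or_pos n with rfl | hn
  · refine (cnt_le_card _).trans ?_
    simp
  have hn' : (0 : ℝ) < n := by exact_mod_cast hn
  have hU : cnt (fun x => x ∉ X) = n - X.card := by simpa using cnt_not_mem X
  -- pairs of small codegree into the complement of `X`
  have b₁ := h₁ n H (cherryDense_mono (min_le_left _ _) hC) (fun x _ => x ∉ X)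
  simp only [hU, hX, true_and] at b₁
  set low : Fin n → Fin n → Prop := fun y a => cnt (fun x => x ∉ X ∧ E H x y a) < d * δ / 2 * n
    with hlow
  have b₂ := h₂ n H (cherryDense_mono (min_le_right _ _) hC) (fun a y => a ∉ X ∧ ¬ low y a)
  set bad₂ : Fin n × Fin n → Prop := fun p =>
    δ / 2 * n ≤ cnt (fun x => x ∉ X ∧ ¬ low p.1 x) ∧
      cnt (fun x => (x ∉ X ∧ ¬ low p.1 x) ∧ E H x p.1 p.2) < d * (δ / 2) / 2 * n with hbad₂
  set Y : Fin n → Prop := fun y => cnt (fun a => a ∉ X ∧ ¬ low y a) < δ / 2 * n with hY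
  have hYc : cnt Y * (δ / 2 * n) ≤ ε * δ / 4 * n ^ 2 := by
    refine le_trans (mul_le_cnt_prod (Q := low) ?_) b₁
    intro y hy
    have h3 : cnt (fun x => x ∉ X) ≤ cnt (fun a => a ∉ X ∧ ¬ low y a) + cnt (low y) := by
      refine cnt_le_add fun a ha => ?_
      by_cases h : low y a
      · exact Or.inr h
      · exact Or.inl ⟨ha, h⟩
    have h4 : cnt (fun a => a ∉ X ∧ ¬ low y a) < δ / 2 * n := hy
    linarith
  have hYc' : cnt Y * n ≤ ε / 2 * n ^ 2 := by
    have : δ * (cnt Y * n) ≤ δ * (ε / 2 * n ^ 2) := by nlinarith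
    exact le_of_mul_le_mul_left this hδ
  have key : ∀ p : Fin n × Fin n, extn H X p.1 p.2 < d ^ 2 * δ ^ 2 / 8 * n ^ 2 →
      bad₂ (p.2, p.1) ∨ (True ∧ Y p.2) := by
    rintro ⟨x, y⟩ hp
    by_contra hc
    push Not at hc
    obtain ⟨c1, c2⟩ := hc
    have hyY : ¬ Y y := c2 trivial
    have c3 : ¬ (cnt (fun a => a ∉ X ∧ ¬ low y a) < δ / 2 * n) := hyY
    have c4 : d * (δ / 2) / 2 * n ≤ cnt (fun a => (a ∉ X ∧ ¬ low y a) ∧ E H a y x) := by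
      by_contra h
      exact c1 ⟨not_lt.mp c3, not_le.mp h⟩
    have c5 : cnt (fun a => (a ∉ X ∧ ¬ low y a) ∧ E H a y x) * (d * δ / 2 * n) ≤
        extn H X x y := by
      refine le_trans (mul_le_cnt_prod
        (Q := fun a b => (a ∉ X ∧ b ∉ X) ∧ E H x y a ∧ E H y a b) ?_) le_rfl
      rintro a ⟨⟨ha1, ha2⟩, ha3⟩
      have ha4 : d * δ / 2 * n ≤ cnt (fun b => b ∉ X ∧ E H b y a) := not_lt.mp ha2
      refine ha4.trans (cnt_mono ?_)
      rintro b ⟨hb1, hb2⟩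
      exact ⟨⟨ha1, hb1⟩, ha3.rev, hb2.swap.swap'⟩
    have c6 : d * (δ / 2) / 2 * n * (d * δ / 2 * n) ≤
        cnt (fun a => (a ∉ X ∧ ¬ low y a) ∧ E H a y x) * (d * δ / 2 * n) := by
      gcongr
    have hp' : extn H X x y < d ^ 2 * δ ^ 2 / 8 * n ^ 2 := hp
    nlinarith
  refine (cnt_le_add key).trans ?_
  rw [cnt_rect (fun _ => True) Y, cnt_swap (fun x y => bad₂ (y, x))]
  have h3 : cnt (fun _ : Fin n => True) ≤ n := by simpa using cnt_le_card (fun _ : Fin n => True)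
  have h4 : cnt (fun _ : Fin n => True) * cnt Y ≤ n * cnt Y := by
    gcongr
    exact cnt_nonneg _
  have h5 : cnt (fun p : Fin n × Fin n => bad₂ (p.1, p.2)) ≤ ε / 2 * n ^ 2 := b₂
  linarith

/-- Any two pairs with quadratically many continuations outside `X` are joined by a tight path with
four inner vertices, all outside `X`. -/
lemma connect {d γ : ℝ} (hd : 0 < d) (hγ : 0 < γ) :
    ∃ (n₀ : ℕ) (ρ : ℝ), 0 < ρ ∧ ∀ n : ℕ, n₀ ≤ n → ∀ H : Finset (Finset (Fin n)),
      (∀ e ∈ H, e.card = 3) → CherryDense n H ρ d →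
      ∀ (X : Finset (Fin n)) (x y w z : Fin n),
        γ * n ^ 2 ≤ extn H X x y → γ * n ^ 2 ≤ extn H X w z →
        ∃ a b c e : Fin n, a ∉ X ∧ b ∉ X ∧ c ∉ X ∧ e ∉ X ∧ [a, b, c, e].Nodup ∧
          E H x y a ∧ E H y a b ∧ E H a b c ∧ E H b c e ∧ E H c e z ∧ E H e z w := by
  classical
  obtain ⟨ρ, hρ, h₁⟩ := cherry_bad hd (half_pos hγ) (show 0 < γ ^ 2 / 16 by positivity)
  obtain ⟨n₁, hn₁⟩ := exists_nat_gt (2 / (d * (γ / 2) / 2))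
  refine ⟨n₁ + 1, ρ, hρ, ?_⟩
  intro n hn H hH hC X x y w z hxy hwz
  have hn0 : 0 < n := by omega
  have hn' : (0 : ℝ) < n := by exact_mod_cast hn0
  have hbig : 1 < d * (γ / 2) / 2 * n := by
    have : (2 / (d * (γ / 2) / 2)) < n := hn₁.trans (by exact_mod_cast hn)
    rw [div_lt_iff₀ (by positivity)] at this
    linarith
  set G : Fin n → Fin n → Fin n → Fin n → Prop := fun x y a b =>
    (a ∉ X ∧ b ∉ X) ∧ E H x y a ∧ E H y a b with hG
  set R : Fin n → Fin n → Fin n → Prop := fun x y b =>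
    γ / 2 * n ≤ cnt (fun a => G x y a b) with hR
  have r₁ : γ / 2 * n ≤ cnt (R x y) := cnt_rich hn0 hγ.le hxy
  have r₂ : γ / 2 * n ≤ cnt (R w z) := cnt_rich hn0 hγ.le hwz
  have b₁ := h₁ n H hC (G x y)
  have b₂ := h₁ n H hC (G w z)
  set B : Fin n → Fin n → Fin n → Fin n → Prop := fun x y b c =>
    γ / 2 * n ≤ cnt (fun a => G x y a b) ∧
      cnt (fun a => G x y a b ∧ E H a b c) < d * (γ / 2) / 2 * n with hB
  have b₁' : cnt (fun p : Fin n × Fin n => B x y p.1 p.2) ≤ γ ^ 2 / 16 * n ^ 2 := b₁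
  have b₂' : cnt (fun p : Fin n × Fin n => B w z p.2 p.1) ≤ γ ^ 2 / 16 * n ^ 2 := by
    rw [← cnt_swap (fun a b => B w z a b)]
    exact b₂
  have hlt : cnt (fun p : Fin n × Fin n => B x y p.1 p.2 ∨ B w z p.2 p.1) <
      cnt (fun p : Fin n × Fin n => R x y p.1 ∧ R w z p.2) := by
    rw [cnt_rect]
    have h2 : γ / 2 * n * (γ / 2 * n) ≤ cnt (R x y) * cnt (R w z) :=
      mul_le_mul r₁ r₂ (by positivity) (cnt_nonneg _)
    have h3 := cnt_le_add (P := fun p : Fin n × Fin n => B x y p.1 p.2 ∨ B w z p.2 p.1)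
      (Q := fun p : Fin n × Fin n => B x y p.1 p.2) (R := fun p => B w z p.2 p.1) fun _ h => h
    have h4 : 0 < γ ^ 2 * (n : ℝ) ^ 2 := by positivity
    nlinarith
  obtain ⟨⟨b, c⟩, ⟨hb, hc⟩, hbc⟩ := exists_of_cnt_lt hlt
  simp only [not_or] at hbc hb hc
  have k₁ : d * (γ / 2) / 2 * n ≤ cnt (fun a => G x y a b ∧ E H a b c) := by
    by_contra h
    exact hbc.1 ⟨hb, not_le.mp h⟩
  have k₂ : d * (γ / 2) / 2 * n ≤ cnt (fun e => G w z e c ∧ E H e c b) := by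
    by_contra h
    exact hbc.2 ⟨hc, not_le.mp h⟩
  obtain ⟨a, ⟨⟨ha, hbX⟩, ha2, ha3⟩, ha4⟩ := exists_of_cnt_pos (lt_of_lt_of_le (by linarith) k₁)
  obtain ⟨e, ⟨⟨⟨he, hcX⟩, he2, he3⟩, he4⟩, hea⟩ := exists_of_cnt_lt
    (P := fun e => G w z e c ∧ E H e c b) (Q := fun e => e = a) (by
      rw [cnt_eq_le_one]; linarith)
  refine ⟨a, b, c, e, ha, hbX, hcX, he, ?_, ha2, ha3, ha4, he4.rev, ?_, he2.rev⟩
  · have := ha4.ne hH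
    have := he4.ne hH
    simp only [List.nodup_cons, List.mem_cons, List.not_mem_nil, or_false, not_or,
      List.nodup_nil, and_true, not_false_eq_true]
    tauto
  · exact he3.rev

/-! ### Tight paths and cycles as lists -/

section Lists

variable {n : ℕ} {H : Finset (Finset (Fin n))}

/-- Every three consecutive entries of the list form an edge of `H`. -/
def Tight (H : Finset (Finset (Fin n))) : List (Fin n) → Prop
  | x :: y :: z :: l => E H x y z ∧ Tight H (y :: z :: l)
  | _ => True

lemma Tight.right {s t : List (Fin n)} (h : Tight H (s ++ t)) : Tight H t := by
  induction s with
  | nil => exact h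
  | cons x s ih =>
    apply ih
    rcases hst : s ++ t with _ | ⟨y, _ | ⟨z, l⟩⟩
    · trivial
    · trivial
    · rw [List.cons_append, hst] at h
      exact h.2

lemma Tight.left {s t : List (Fin n)} (h : Tight H (s ++ t)) : Tight H s := by
  induction s with
  | nil => trivial
  | cons x s ih =>
    rcases s with _ | ⟨y, _ | ⟨z, l⟩⟩
    · trivial
    · trivial
    · exact ⟨h.1, ih h.2⟩

lemma Tight.glue {s t : List (Fin n)} {x y : Fin n} (h₁ : Tight H (s ++ [x, y]))
    (h₂ : Tight H (x :: y :: t)) : Tight H (s ++ x :: y :: t) := by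
  induction s with
  | nil => exact h₂
  | cons u s ih =>
    rcases s with _ | ⟨v, _ | ⟨w, l⟩⟩
    · exact ⟨h₁.1, h₂⟩
    · exact ⟨h₁.1, ih h₁.2⟩
    · exact ⟨h₁.1, ih h₁.2⟩

lemma Tight.getElem {K : List (Fin n)} (h : Tight H K) : ∀ (i : ℕ) (x y z : Fin n),
    K[i]? = some x → K[i + 1]? = some y → K[i + 2]? = some z → E H x y z := by
  induction K with
  | nil => intro i x y z hx; simp at hx
  | cons u K ih =>
    intro i x y z hx hy hz
    rcases i with _ | i
    · rcases K with _ | ⟨v, _ | ⟨w, l⟩⟩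
      · simp at hy
      · simp at hz
      · simp at hx hy hz
        subst hx hy hz
        exact h.1
    · exact ih (Tight.right (s := [u]) h) i x y z (by simpa using hx) (by simpa using hy)
        (by simpa using hz)

/-- `L` is a tight path in `H` starting with `p, q` and ending with `r, s`; these two pairs may
overlap. -/
structure IsPath (H : Finset (Finset (Fin n))) (L : List (Fin n)) (p q r s : Fin n) : Prop where
  nodup : L.Nodup
  tight : Tight H L
  start : ∃ M, L = p :: q :: M
  finish : ∃ M, L = M ++ [r, s]

lemma IsPath.join {L B : List (Fin n)} {p q r s u w r' s' a b c e : Fin n}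
    (hL : IsPath H L p q r s) (hB : IsPath H B u w r' s') (hLB : L.Disjoint B)
    (hCL : L.Disjoint [a, b, c, e]) (hCB : [a, b, c, e].Disjoint B) (hC : [a, b, c, e].Nodup)
    (h1 : E H r s a) (h2 : E H s a b) (h3 : E H a b c) (h4 : E H b c e) (h5 : E H c e u)
    (h6 : E H e u w) : IsPath H (L ++ ([a, b, c, e] ++ B)) p q r' s' := by
  obtain ⟨M₁, hM₁⟩ := hL.start
  obtain ⟨M₂, hM₂⟩ := hL.finish
  obtain ⟨N₁, hN₁⟩ := hB.start
  obtain ⟨N₂, hN₂⟩ := hB.finish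
  refine ⟨?_, ?_, ⟨M₁ ++ ([a, b, c, e] ++ B), by rw [hM₁]; simp⟩,
    ⟨L ++ ([a, b, c, e] ++ N₂), by rw [hN₂]; simp⟩⟩
  · refine hL.nodup.append (hC.append hB.nodup hCB) ?_
    exact List.disjoint_append_right.mpr ⟨hCL, hLB⟩
  · have t1 : Tight H (M₂ ++ r :: s :: [a, b, c, e, u, w]) := by
      refine Tight.glue (by rw [← hM₂]; exact hL.tight) ?_
      exact ⟨h1, h2, h3, h4, h5, h6, trivial⟩
    have t2 : Tight H ((M₂ ++ [r, s, a, b, c, e]) ++ u :: w :: N₁) := by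
      refine Tight.glue (by simpa using t1) ?_
      rw [← hN₁]; exact hB.tight
    rw [hM₂, hN₁]
    simpa using t2

/-- `L` lists the vertices of a tight cycle in cyclic order. -/
def IsCyc (H : Finset (Finset (Fin n))) (L : List (Fin n)) : Prop :=
  L.Nodup ∧ ∃ p q M, L = p :: q :: M ∧ Tight H (L ++ [p, q])

lemma IsPath.close {L : List (Fin n)} {p q r s a b c e : Fin n} (hL : IsPath H L p q r s)
    (hCL : L.Disjoint [a, b, c, e]) (hC : [a, b, c, e].Nodup)
    (h1 : E H r s a) (h2 : E H s a b) (h3 : E H a b c) (h4 : E H b c e) (h5 : E H c e p)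
    (h6 : E H e p q) : IsCyc H (L ++ [a, b, c, e]) := by
  obtain ⟨M₁, hM₁⟩ := hL.start
  obtain ⟨M₂, hM₂⟩ := hL.finish
  refine ⟨hL.nodup.append hC hCL, p, q, M₁ ++ [a, b, c, e], by rw [hM₁]; simp, ?_⟩
  have t1 : Tight H (M₂ ++ r :: s :: [a, b, c, e, p, q]) := by
    refine Tight.glue (by rw [← hM₂]; exact hL.tight) ?_
    exact ⟨h1, h2, h3, h4, h5, h6, trivial⟩
  rw [hM₂]
  simpa using t1

lemma IsCyc.hasTightHamCycle {L : List (Fin n)} (h : IsCyc H L) (hn : L.length = n) :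
    HasTightHamCycle n H := by
  obtain ⟨hnd, p, q, M, hM, ht⟩ := h
  have hn2 : 2 ≤ n := by rw [← hn, hM]; simp
  have : NeZero n := ⟨by omega⟩
  have hK : ∀ j, j < n + 2 → (L ++ [p, q])[j]? = L[j % n]? := by
    intro j hj
    rcases lt_or_ge j n with h | h
    · rw [Nat.mod_eq_of_lt h, List.getElem?_append_left (by omega)]
    · rw [List.getElem?_append_right (by omega), hn]
      obtain rfl | rfl : j = n ∨ j = n + 1 := by omega
      · simp [hM]
      · rw [Nat.add_mod_left, Nat.mod_eq_of_lt (by omega)]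
        simp [hM]
  have hlt : ∀ i : ZMod n, i.val < L.length := fun i => (ZMod.val_lt i).trans_eq hn.symm
  let f : ZMod n → Fin n := fun i => L[i.val]'(hlt i)
  have hf : ∀ i : ZMod n, L[i.val]? = some (f i) := fun i => List.getElem?_eq_getElem (hlt i)
  have hinj : Function.Injective f := by
    intro i j hij
    have := (List.Nodup.getElem_inj_iff hnd).mp hij
    exact ZMod.val_injective n this
  refine ⟨f, ?_, ?_⟩
  · rw [Fintype.bijective_iff_injective_and_card]
    exact ⟨hinj, by simp [ZMod.card]⟩
  · intro i
    have hi := ZMod.val_lt i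
    refine Tight.getElem ht i.val _ _ _ ?_ ?_ ?_
    · rw [hK _ (by omega), Nat.mod_eq_of_lt hi]
      exact hf i
    · rw [hK _ (by omega), ← hf, ZMod.val_add, ZMod.val_one_eq_one_mod]
      simp
    · rw [hK _ (by omega), ← hf, ZMod.val_add]
      have : (2 : ZMod n).val = 2 % n := by
        simpa using ZMod.val_natCast n 2
      rw [this]
      simp

/-- Inserting `v` behind an entry `b` of a list keeps every infix avoiding `b`. -/
lemma infix_insert {M s t : List (Fin n)} {b v : Fin n} (h : M <:+: (s ++ [b]) ++ t)
    (hb : b ∉ M) : M <:+: (s ++ [b]) ++ v :: t := by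
  have hleft : M <:+: s ++ [b] → M <:+: (s ++ [b]) ++ v :: t := fun h =>
    h.trans (List.prefix_append _ _).isInfix
  have hright : M <:+: t → M <:+: (s ++ [b]) ++ v :: t := fun h =>
    h.trans ⟨(s ++ [b]) ++ [v], [], by simp⟩
  obtain ⟨u, w, huw⟩ := h
  rcases List.append_eq_append_iff.mp huw with ⟨as, h1, h2⟩ | ⟨as, h1, h2⟩
  · exact hleft ⟨u, as, h1.symm⟩
  · rcases List.append_eq_append_iff.mp h1 with ⟨bs, h3, h4⟩ | ⟨bs, h3, h4⟩
    · rcases bs.eq_nil_or_concat with rfl | ⟨bs', y, rfl⟩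
      · refine hright ⟨[], w, ?_⟩
        rw [h2, h4]; simp
      · exfalso
        apply hb
        have : b = y := by
          have h5 : s ++ [b] = (u ++ bs') ++ [y] := by rw [h3]; simp
          simpa using (List.append_inj' h5 rfl).2
        rw [h4, this]; simp
    · refine hright ⟨bs, w, ?_⟩
      rw [h2, h4]

end Lists

/-! ### Absorption -/

section Absorb

variable {n : ℕ} {H : Finset (Finset (Fin n))}

/-- The entries of a quadruple, as a list. -/
def tl (T : Fin n × Fin n × Fin n × Fin n) : List (Fin n) := [T.1, T.2.1, T.2.2.1, T.2.2.2]

/-- A quadruple `(a, b, c, e)` absorbs `v` if both `abce` and `abvce` are tight paths. The end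
pairs are moreover required to satisfy `g` when read outwards. -/
def Absorbs (H : Finset (Finset (Fin n))) (g : Fin n → Fin n → Prop) (v : Fin n)
    (T : Fin n × Fin n × Fin n × Fin n) : Prop :=
  match T with
  | (a, b, c, e) => (E H a b c ∧ E H b c e ∧ E H a b v ∧ E H b v c ∧ E H v c e) ∧ a ≠ e ∧
      g b a ∧ g c e

/-- The quadruples in `F` are segments of `L`, and they are pairwise disjoint. -/
def Family (L : List (Fin n)) (F : Finset (Fin n × Fin n × Fin n × Fin n)) : Prop :=
  (∀ T ∈ F, tl T <:+: L) ∧ ∀ T ∈ F, ∀ T' ∈ F, T ≠ T' → (tl T).Disjoint (tl T')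

lemma IsCyc.insert {L : List (Fin n)} {g : Fin n → Fin n → Prop} {v : Fin n}
    {F : Finset (Fin n × Fin n × Fin n × Fin n)} (hL : IsCyc H L) (hF : Family L F) (hv : v ∉ L)
    {T : Fin n × Fin n × Fin n × Fin n} (hT : T ∈ F) (hvT : Absorbs H g v T) :
    ∃ L', IsCyc H L' ∧ Family L' (F.erase T) ∧ L'.length = L.length + 1 ∧
      ∀ x, x ∉ L' → x ∉ L := by
  obtain ⟨s, t, hst⟩ := hF.1 T hT
  obtain ⟨a, b, c, e⟩ := T
  obtain ⟨⟨h1, h2, h3, h4, h5⟩, -⟩ := hvT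
  simp only [tl] at hst
  obtain ⟨hnd, p, q, M, hM, ht⟩ := hL
  refine ⟨s ++ [a, b, v, c, e] ++ t, ⟨?_, p, q, ?_⟩, ⟨?_, ?_⟩, ?_, ?_⟩
  · have hp : (s ++ [a, b, v, c, e] ++ t).Perm (v :: L) := by
      rw [← hst]
      have : s ++ [a, b, v, c, e] ++ t = (s ++ [a, b]) ++ v :: ([c, e] ++ t) := by simp
      rw [this]
      refine List.perm_middle.trans ?_
      simp
    rw [hp.nodup_iff]
    exact List.nodup_cons.mpr ⟨hv, hnd⟩
  · have hstart : ∃ M', s ++ [a, b, v, c, e] ++ t = p :: q :: M' := by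
      rw [← hst] at hM
      rcases s with _ | ⟨x, _ | ⟨y, s⟩⟩
      · simp at hM ⊢
        exact ⟨hM.1, hM.2.1⟩
      · simp at hM ⊢
        exact ⟨hM.1, hM.2.1⟩
      · simp at hM ⊢
        exact ⟨hM.1, hM.2.1⟩
    obtain ⟨M', hM'⟩ := hstart
    refine ⟨M', hM', ?_⟩
    rw [← hst] at ht
    have t1 : Tight H (s ++ [a, b]) := by
      apply Tight.left (t := [c, e] ++ t ++ [p, q])
      simpa using ht
    have t2 : Tight H (c :: e :: (t ++ [p, q])) := by
      apply Tight.right (s := s ++ [a, b])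
      simpa using ht
    have t3 : Tight H ((s ++ [a, b, v]) ++ [c, e]) := by
      have := Tight.glue (t := [v, c, e]) t1 ⟨h3, h4, h5, trivial⟩
      simpa using this
    have t4 := Tight.glue t3 t2
    simpa using t4
  · intro T' hT'
    rw [Finset.mem_erase] at hT'
    have hdis := hF.2 T' hT'.2 _ hT hT'.1
    have hb : b ∉ tl T' := fun h => hdis h (by simp [tl])
    have := infix_insert (s := s ++ [a]) (t := [c, e] ++ t) (v := v)
      (by have := hF.1 T' hT'.2; rw [← hst] at this; simpa using this) hb
    simpa using this
  · intro T₁ h₁ T₂ h₂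
    exact hF.2 T₁ (Finset.mem_of_mem_erase h₁) T₂ (Finset.mem_of_mem_erase h₂)
  · rw [← hst]; simp; omega
  · intro x hx hxL
    apply hx
    rw [← hst] at hxL
    simp at hxL ⊢
    tauto

/-- A tight cycle missing `k` vertices, each of which has `k` absorbers in a disjoint family on the
cycle, grows to a tight Hamilton cycle: the missing vertices are inserted one at a time. -/
lemma absorb_all {g : Fin n → Fin n → Prop} [∀ v, DecidablePred (Absorbs H g v)] (k : ℕ) :
    ∀ (L : List (Fin n)) (F : Finset (Fin n × Fin n × Fin n × Fin n)), IsCyc H L → Family L F →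
      L.length + k = n → (∀ v, v ∉ L → k ≤ (F.filter (Absorbs H g v)).card) →
      HasTightHamCycle n H := by
  induction k with
  | zero =>
    intro L F hL _ hk _
    exact hL.hasTightHamCycle (by omega)
  | succ k ih =>
    intro L F hL hF hk hc
    obtain ⟨v, hv⟩ : ∃ v, v ∉ L := by
      by_contra! h
      have h1 : L.toFinset = Finset.univ := by ext; simp [h]
      have h2 := List.toFinset_card_le L
      rw [h1] at h2
      simp at h2
      omega
    have h1 := hc v hv
    obtain ⟨T, hT⟩ := Finset.card_pos.mp (lt_of_lt_of_le (Nat.succ_pos k) h1)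
    rw [Finset.mem_filter] at hT
    obtain ⟨L', hL', hF', hlen, hsub⟩ := hL.insert hF hv hT.1 hT.2
    refine ih L' (F.erase T) hL' hF' (by omega) ?_
    intro w hw
    have h2 := hc w (hsub w hw)
    rw [Finset.filter_erase]
    have := Finset.pred_card_le_card_erase (s := F.filter (Absorbs H g w)) (a := T)
    omega

end Absorb

/-! ### Many absorbers -/

lemma cnt_fst {α β : Type*} [Fintype α] [Fintype β] (A : α → Prop) :
    cnt (fun p : α × β => A p.1) = cnt A * Fintype.card β := by
  have h : cnt (fun _ : β => True) = Fintype.card β := by simpa using cnt_not_mem (∅ : Finset β)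
  rw [← h, ← cnt_rect]
  exact cnt_congr fun p => by simp

lemma cnt_snd {α β : Type*} [Fintype α] [Fintype β] (B : β → Prop) :
    cnt (fun p : α × β => B p.2) = Fintype.card α * cnt B := by
  have h : cnt (fun _ : α => True) = Fintype.card α := by simpa using cnt_not_mem (∅ : Finset α)
  rw [← h, ← cnt_rect]
  exact cnt_congr fun p => by simp

lemma cnt_equiv {α β : Type*} [Fintype α] [Fintype β] (f : α ≃ β) (P : β → Prop) :
    cnt (fun x => P (f x)) = cnt P := by
  classical
  rw [cnt_eq_sum, cnt_eq_sum]
  exact Equiv.sum_comp f fun y => if P y then (1 : ℝ) else 0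

/-- Reorders the middle pair and the outer pair of a quadruple into the quadruple. -/
def quadEquiv (V : Type*) : (V × V) × (V × V) ≃ V × V × V × V where
  toFun p := (p.2.1, p.1.1, p.1.2, p.2.2)
  invFun t := ((t.2.1, t.2.2.1), (t.1, t.2.2.2))
  left_inv _ := rfl
  right_inv _ := rfl

lemma vdeg_le_cnt {n : ℕ} {H : Finset (Finset (Fin n))} (hH : ∀ e ∈ H, e.card = 3) (v : Fin n) :
    (vdeg n H v : ℝ) ≤ cnt (fun p : Fin n × Fin n => E H v p.1 p.2) := by
  classical
  rw [cnt_eq_card]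
  unfold vdeg
  norm_cast
  refine le_trans (Finset.card_le_card ?_) (Finset.card_image_le
    (f := fun p : Fin n × Fin n => ({v, p.1, p.2} : Finset (Fin n))))
  intro e he
  rw [Finset.mem_filter] at he
  have h1 : (e.erase v).card = 2 := by rw [Finset.card_erase_of_mem he.2, hH e he.1]
  obtain ⟨b, c, -, hbc⟩ := Finset.card_eq_two.mp h1
  have h2 : ({v, b, c} : Finset (Fin n)) = e := by
    rw [← hbc]; exact Finset.insert_erase he.2
  rw [Finset.mem_image]
  refine ⟨(b, c), ?_, h2⟩
  simp only [Finset.mem_filter, Finset.mem_univ, true_and]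
  unfold E
  rw [h2]
  exact he.1

/-- The link of every vertex `v` is a dense graph, and cherry-density turns a positive proportion of
the walks `abce` of this graph into tight paths of `H`, which then absorb `v`. -/
lemma abs_count {α d : ℝ} (hα : 0 < α) (hd : 0 < d) :
    ∃ (n₀ : ℕ) (ρ : ℝ), 0 < ρ ∧ ∀ n : ℕ, n₀ ≤ n → ∀ H : Finset (Finset (Fin n)),
      (∀ e ∈ H, e.card = 3) → CherryDense n H ρ d →
      ∀ g : Fin n → Fin n → Prop,
        cnt (fun p : Fin n × Fin n => ¬ g p.1 p.2) ≤ α / 64 * n ^ 2 →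
        ∀ v, α * (n.choose 2 : ℝ) ≤ (vdeg n H v : ℝ) →
          α / 16 * (d * (α / 64) / 2) ^ 2 * n ^ 4 ≤ cnt (Absorbs H g v) := by
  classical
  have hτ : 0 < α / 64 := by positivity
  obtain ⟨ρ, hρ, h₁⟩ := cherry_bad hd hτ hτ
  set τ : ℝ := α / 64 with hτdef
  obtain ⟨n₁, hn₁⟩ := exists_nat_gt (2 / (d * τ / 2) ^ 2)
  refine ⟨n₁ + 2, ρ, hρ, ?_⟩
  intro n hn H hH hC g hg v hv
  have hn2 : (2 : ℝ) ≤ n := by exact_mod_cast (show 2 ≤ n by omega)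
  have hn' : (0 : ℝ) < n := by linarith
  have hbig : (n : ℝ) ≤ (d * τ / 2) ^ 2 / 2 * n ^ 2 := by
    have : 2 / (d * τ / 2) ^ 2 < n := hn₁.trans (by exact_mod_cast (show n₁ < n by omega))
    rw [div_lt_iff₀ (by positivity)] at this
    nlinarith
  set G : Fin n → Fin n → Prop := fun a b => E H v a b ∧ g b a with hG
  set S : Fin n × Fin n → Prop := fun p => E H v p.1 p.2 with hS
  have hScard : α / 4 * n ^ 2 ≤ cnt S := by
    have h2 := vdeg_le_cnt hH v
    rw [Nat.cast_choose_two] at hv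
    have : α / 4 * n ^ 2 ≤ α * (n * (n - 1) / 2) := by
      have h3 : 0 ≤ α * n * (n - 2) := by
        have : (0 : ℝ) ≤ n - 2 := by linarith
        positivity
      nlinarith
    linarith
  set poor : Fin n → Prop := fun b => cnt (fun a => G a b) < τ * n with hpoor
  set B : Fin n → Fin n → Prop := fun b c => τ * n ≤ cnt (fun a => G a b) ∧
    cnt (fun a => G a b ∧ E H a b c) < d * τ / 2 * n with hB
  have hBc : cnt (fun p : Fin n × Fin n => B p.1 p.2) ≤ τ * n ^ 2 := h₁ n H hC G
  have hBc' : cnt (fun p : Fin n × Fin n => B p.2 p.1) ≤ τ * n ^ 2 := by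
    rw [← cnt_swap (fun a b => B a b)]; exact hBc
  have hpc : cnt (fun p : Fin n × Fin n => poor p.1 ∧ G p.2 p.1) ≤ τ * n ^ 2 := by
    refine (cnt_prod_le_mul (A := poor) (Q := fun b a => G a b) (t := τ * n) ?_).trans ?_
    · intro b hb
      exact le_of_lt hb
    · have : cnt poor ≤ n := by simpa using cnt_le_card poor
      have : cnt poor * (τ * n) ≤ n * (τ * n) := by gcongr
      nlinarith
  have hpc' : cnt (fun p : Fin n × Fin n => poor p.2 ∧ G p.1 p.2) ≤ τ * n ^ 2 := by
    rw [cnt_swap (fun a b => poor b ∧ G a b)]; exact hpc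
  have hg' : cnt (fun p : Fin n × Fin n => ¬ g p.2 p.1) ≤ τ * n ^ 2 := by
    rw [← cnt_swap (fun a b => ¬ g a b)]; exact hg
  set good : Fin n × Fin n → Prop := fun p =>
    E H v p.1 p.2 ∧ (¬ poor p.1 ∧ ¬ poor p.2) ∧ ¬ B p.1 p.2 ∧ ¬ B p.2 p.1 with hgood
  have hgc : α / 8 * n ^ 2 ≤ cnt good := by
    have s1 : cnt S ≤ cnt good + cnt (fun p : Fin n × Fin n =>
        ((poor p.1 ∧ G p.2 p.1) ∨ ¬ g p.1 p.2) ∨ ((poor p.2 ∧ G p.1 p.2) ∨ ¬ g p.2 p.1) ∨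
        (B p.1 p.2 ∨ B p.2 p.1)) := by
      refine cnt_le_add ?_
      rintro ⟨b, c⟩ h
      have h' : E H v b c := h
      have h'' : E H v c b := h'.swap'
      simp only [hgood, hG]
      tauto
    have s2 := cnt_le_add (P := fun p : Fin n × Fin n =>
        ((poor p.1 ∧ G p.2 p.1) ∨ ¬ g p.1 p.2) ∨ ((poor p.2 ∧ G p.1 p.2) ∨ ¬ g p.2 p.1) ∨
        (B p.1 p.2 ∨ B p.2 p.1)) fun _ h => h
    have s3 := cnt_le_add (P := fun p : Fin n × Fin n => (poor p.1 ∧ G p.2 p.1) ∨ ¬ g p.1 p.2)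
      fun _ h => h
    have s4 := cnt_le_add (P := fun p : Fin n × Fin n =>
        ((poor p.2 ∧ G p.1 p.2) ∨ ¬ g p.2 p.1) ∨ (B p.1 p.2 ∨ B p.2 p.1)) fun _ h => h
    have s5 := cnt_le_add (P := fun p : Fin n × Fin n => (poor p.2 ∧ G p.1 p.2) ∨ ¬ g p.2 p.1)
      fun _ h => h
    have s6 := cnt_le_add (P := fun p : Fin n × Fin n => B p.1 p.2 ∨ B p.2 p.1)
      fun _ h => h
    have : 0 < α * (n : ℝ) ^ 2 := by positivity
    nlinarith
  have hinner : ∀ p : Fin n × Fin n, good p → (d * τ / 2) ^ 2 / 2 * n ^ 2 ≤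
      cnt (fun q : Fin n × Fin n => Absorbs H g v (quadEquiv _ (p, q))) := by
    rintro ⟨b, c⟩ ⟨hbc, ⟨hb, hc⟩, hB1, hB2⟩
    have k₁ : d * τ / 2 * n ≤ cnt (fun a => G a b ∧ E H a b c) := by
      by_contra h
      exact hB1 ⟨not_lt.mp hb, not_le.mp h⟩
    have k₂ : d * τ / 2 * n ≤ cnt (fun e => G e c ∧ E H e c b) := by
      by_contra h
      exact hB2 ⟨not_lt.mp hc, not_le.mp h⟩
    have k₃ : d * τ / 2 * n * (d * τ / 2 * n) ≤
        cnt (fun a => G a b ∧ E H a b c) * cnt (fun e => G e c ∧ E H e c b) :=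
      mul_le_mul k₁ k₂ (by positivity) (cnt_nonneg _)
    rw [← cnt_rect] at k₃
    have k₄ : cnt (fun p : Fin n × Fin n =>
        (G p.1 b ∧ E H p.1 b c) ∧ G p.2 c ∧ E H p.2 c b) ≤
        cnt (fun q : Fin n × Fin n => Absorbs H g v (quadEquiv _ ((b, c), q))) +
        cnt (fun q : Fin n × Fin n => q.2 = q.1) := by
      refine cnt_le_add ?_
      rintro ⟨a, e⟩ ⟨⟨⟨h1, h2⟩, h3⟩, ⟨h4, h5⟩, h6⟩
      by_cases hae : e = a
      · exact Or.inr hae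
      · refine Or.inl ⟨⟨h3, h6.rev, ?_, hbc.swap, ?_⟩, Ne.symm hae, h2, h5⟩
        · exact h1.swap.swap'
        · exact h4.swap'
    have k₅ : cnt (fun q : Fin n × Fin n => q.2 = q.1) = n := by
      rw [cnt_prod (fun a e => e = a)]
      simp [cnt_eq_le_one]
    nlinarith
  rw [← cnt_equiv (quadEquiv _)]
  have hfin := mul_le_cnt_prod (Q := fun p q => Absorbs H g v (quadEquiv _ (p, q))) hinner
  refine le_trans ?_ hfin
  have : α / 8 * n ^ 2 * ((d * τ / 2) ^ 2 / 2 * n ^ 2) ≤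
      cnt good * ((d * τ / 2) ^ 2 / 2 * n ^ 2) := by gcongr
  refine le_trans (le_of_eq ?_) this
  ring

/-- Outside any set leaving linearly many vertices there are two vertices that, read in either
order, have quadratically many continuations. -/
lemma pick {d δ : ℝ} (hd : 0 < d) (hδ : 0 < δ) :
    ∃ (n₀ : ℕ) (ρ : ℝ), 0 < ρ ∧ ∀ n : ℕ, n₀ ≤ n → ∀ H : Finset (Finset (Fin n)),
      CherryDense n H ρ d → ∀ X : Finset (Fin n), δ * n ≤ n - X.card →
        ∃ z w : Fin n, z ∉ X ∧ w ∉ X ∧ z ≠ w ∧ d ^ 2 * δ ^ 2 / 8 * n ^ 2 ≤ extn H X z w ∧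
          d ^ 2 * δ ^ 2 / 8 * n ^ 2 ≤ extn H X w z := by
  classical
  obtain ⟨ρ, hρ, h₁⟩ := most_good hd hδ (show 0 < δ ^ 2 / 4 by positivity)
  obtain ⟨n₁, hn₁⟩ := exists_nat_gt (2 / δ ^ 2)
  refine ⟨n₁ + 1, ρ, hρ, ?_⟩
  intro n hn H hC X hX
  have hn' : (0 : ℝ) < n := by exact_mod_cast (show 0 < n by omega)
  have hbig : (n : ℝ) < δ ^ 2 / 2 * n ^ 2 := by
    have : 2 / δ ^ 2 < n := hn₁.trans (by exact_mod_cast (show n₁ < n by omega))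
    rw [div_lt_iff₀ (by positivity)] at this
    nlinarith
  set bad : Fin n → Fin n → Prop := fun x y => extn H X x y < d ^ 2 * δ ^ 2 / 8 * n ^ 2 with hbad
  have b₁ : cnt (fun p : Fin n × Fin n => bad p.1 p.2) ≤ δ ^ 2 / 4 * n ^ 2 := h₁ n H hC X hX
  have b₂ : cnt (fun p : Fin n × Fin n => bad p.2 p.1) ≤ δ ^ 2 / 4 * n ^ 2 := by
    rw [← cnt_swap (fun a b => bad a b)]; exact b₁
  have b₃ : cnt (fun q : Fin n × Fin n => q.2 = q.1) = n := by
    rw [cnt_prod (fun a e => e = a)]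
    simp [cnt_eq_le_one]
  have hlt : cnt (fun p : Fin n × Fin n => p.2 = p.1 ∨ (bad p.1 p.2 ∨ bad p.2 p.1)) <
      cnt (fun p : Fin n × Fin n => p.1 ∉ X ∧ p.2 ∉ X) := by
    rw [cnt_rect (fun a => a ∉ X) (fun a => a ∉ X)]
    have hU : cnt (fun x => x ∉ X) = n - X.card := by simpa using cnt_not_mem X
    have h2 : δ * n * (δ * n) ≤ cnt (fun x => x ∉ X) * cnt (fun x => x ∉ X) := by
      rw [hU]
      gcongr
      exact le_trans (by positivity) hX
    have s1 := cnt_le_add (P := fun p : Fin n × Fin n =>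
      p.2 = p.1 ∨ (bad p.1 p.2 ∨ bad p.2 p.1)) fun _ h => h
    have s2 := cnt_le_add (P := fun p : Fin n × Fin n => bad p.1 p.2 ∨ bad p.2 p.1) fun _ h => h
    nlinarith
  obtain ⟨⟨z, w⟩, ⟨hz, hw⟩, h⟩ := exists_of_cnt_lt hlt
  simp only [not_or] at h
  exact ⟨z, w, hz, hw, fun h' => h.1 h'.symm, not_lt.mp h.2.1, not_lt.mp h.2.2⟩

/-! ### The absorbing path -/

section Paths

variable {n : ℕ} {H : Finset (Finset (Fin n))}

/-- The conclusion of `connect` for a fixed hypergraph: pairs with `γn²` continuations outside `X`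
are joined by tight paths with four inner vertices outside `X`. -/
def Connected (H : Finset (Finset (Fin n))) (γ : ℝ) : Prop :=
  ∀ (X : Finset (Fin n)) (x y w z : Fin n),
    γ * n ^ 2 ≤ extn H X x y → γ * n ^ 2 ≤ extn H X w z →
    ∃ a b c e : Fin n, a ∉ X ∧ b ∉ X ∧ c ∉ X ∧ e ∉ X ∧ [a, b, c, e].Nodup ∧
      E H x y a ∧ E H y a b ∧ E H a b c ∧ E H b c e ∧ E H c e z ∧ E H e z w

lemma Connected.join {γ : ℝ} (hcon : Connected H γ) {L B : List (Fin n)}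
    {p q r s u w r' s' : Fin n} (hL : IsPath H L p q r s) (hB : IsPath H B u w r' s')
    (hLB : L.Disjoint B) (h₁ : γ * n ^ 2 ≤ extn H (L ++ B).toFinset r s)
    (h₂ : γ * n ^ 2 ≤ extn H (L ++ B).toFinset w u) :
    ∃ C : List (Fin n), C.length = 4 ∧ IsPath H (L ++ (C ++ B)) p q r' s' := by
  obtain ⟨a, b, c, e, ha, hb, hc, he, hnd, e1, e2, e3, e4, e5, e6⟩ := hcon _ r s w u h₁ h₂
  simp only [List.mem_toFinset, List.mem_append, not_or] at ha hb hc he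
  refine ⟨[a, b, c, e], rfl, hL.join hB hLB ?_ ?_ hnd e1 e2 e3 e4 e5 e6⟩
  · simp [ha, hb, hc, he]
  · simp [ha, hb, hc, he]

lemma Connected.close {γ : ℝ} (hcon : Connected H γ) {L : List (Fin n)}
    {p q r s : Fin n} (hL : IsPath H L p q r s) (h₁ : γ * n ^ 2 ≤ extn H L.toFinset r s)
    (h₂ : γ * n ^ 2 ≤ extn H L.toFinset q p) :
    ∃ C : List (Fin n), C.length = 4 ∧ IsCyc H (L ++ C) := by
  obtain ⟨a, b, c, e, ha, hb, hc, he, hnd, e1, e2, e3, e4, e5, e6⟩ := hcon _ r s q p h₁ h₂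
  simp only [List.mem_toFinset] at ha hb hc he
  refine ⟨[a, b, c, e], rfl, hL.close ?_ hnd e1 e2 e3 e4 e5 e6⟩
  simp [ha, hb, hc, he]

/-- Forbidding at most `k` further vertices costs at most `2kn` continuations. -/
lemma le_extn_of_add {L M : List (Fin n)} {X : Finset (Fin n)} {x y : Fin n} {k t t' : ℝ}
    (h : t ≤ extn H X x y) (hX : L.toFinset ⊆ X) (hk : (M.length : ℝ) ≤ k)
    (ht : t' + 2 * k * n ≤ t) {K : List (Fin n)} (hK : ∀ v ∈ K, v ∈ L ∨ v ∈ M) :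
    t' ≤ extn H K.toFinset x y := by
  classical
  have h1 : ((K.toFinset \ X).card : ℝ) ≤ k := by
    refine le_trans ?_ hk
    have : K.toFinset \ X ⊆ M.toFinset := by
      intro v hv
      rw [Finset.mem_sdiff, List.mem_toFinset] at hv
      rcases hK v hv.1 with h | h
      · exact absurd (hX (List.mem_toFinset.mpr h)) hv.2
      · exact List.mem_toFinset.mpr h
    exact_mod_cast (Finset.card_le_card this).trans (List.toFinset_card_le M)
  have := extn_le_add (H := H) h1 x y
  linarith

/-- Averaging over all quadruples: some quadruple outside `X` absorbs a positive proportion of the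
total weight. -/
lemma choose_quad {g : Fin n → Fin n → Prop} [∀ v, DecidablePred (Absorbs H g v)] {η : ℝ}
    (hη : 0 < η) (hn : 0 < n)
    (habs : ∀ v, η * n ^ 4 ≤ cnt (Absorbs H g v)) (X : Finset (Fin n))
    (hX : (X.card : ℝ) ≤ η / 8 * n) (w : Fin n → ℝ) (hw : ∀ v, 0 < w v) :
    ∃ T : Fin n × Fin n × Fin n × Fin n, (∀ x ∈ tl T, x ∉ X) ∧ (∃ v, Absorbs H g v T) ∧
      η / 2 * ∑ v, w v ≤ ∑ v, if Absorbs H g v T then w v else 0 := by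
  classical
  have hn' : (0 : ℝ) < n := by exact_mod_cast hn
  set P : Fin n × Fin n × Fin n × Fin n → Prop := fun T => ∀ x ∈ tl T, x ∉ X with hP
  have hmeet : cnt (fun T : Fin n × Fin n × Fin n × Fin n => ¬ P T) ≤ η / 2 * n ^ 4 := by
    have s1 : cnt (fun T : Fin n × Fin n × Fin n × Fin n => ¬ P T) ≤
        cnt (fun T : Fin n × Fin n × Fin n × Fin n => T.1 ∈ X) +
        cnt (fun T : Fin n × Fin n × Fin n × Fin n =>
          T.2.1 ∈ X ∨ (T.2.2.1 ∈ X ∨ T.2.2.2 ∈ X)) := by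
      refine cnt_le_add fun T hT => ?_
      simp only [hP, tl, List.mem_cons, List.not_mem_nil, or_false] at hT
      by_contra hc
      apply hT
      rintro x (rfl | rfl | rfl | rfl) <;> tauto
    have s2 := cnt_le_add (P := fun T : Fin n × Fin n × Fin n × Fin n =>
      T.2.1 ∈ X ∨ (T.2.2.1 ∈ X ∨ T.2.2.2 ∈ X)) fun _ h => h
    have s3 := cnt_le_add (P := fun T : Fin n × Fin n × Fin n × Fin n =>
      T.2.2.1 ∈ X ∨ T.2.2.2 ∈ X) fun _ h => h
    have m1 : cnt (fun T : Fin n × Fin n × Fin n × Fin n => T.1 ∈ X) = X.card * n ^ 3 := by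
      rw [cnt_fst (fun a => a ∈ X), cnt_mem]
      simp only [Fintype.card_prod, Fintype.card_fin]
      push_cast
      ring
    have m2 : cnt (fun T : Fin n × Fin n × Fin n × Fin n => T.2.1 ∈ X) = X.card * n ^ 3 := by
      rw [cnt_snd (fun t : Fin n × Fin n × Fin n => t.1 ∈ X), cnt_fst (fun a => a ∈ X), cnt_mem]
      simp; ring
    have m3 : cnt (fun T : Fin n × Fin n × Fin n × Fin n => T.2.2.1 ∈ X) = X.card * n ^ 3 := by
      rw [cnt_snd (fun t : Fin n × Fin n × Fin n => t.2.1 ∈ X),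
        cnt_snd (fun t : Fin n × Fin n => t.1 ∈ X), cnt_fst (fun a => a ∈ X), cnt_mem]
      simp; ring
    have m4 : cnt (fun T : Fin n × Fin n × Fin n × Fin n => T.2.2.2 ∈ X) = X.card * n ^ 3 := by
      rw [cnt_snd (fun t : Fin n × Fin n × Fin n => t.2.2 ∈ X),
        cnt_snd (fun t : Fin n × Fin n => t.2 ∈ X), cnt_snd (fun a => a ∈ X), cnt_mem]
      simp; ring
    have : (X.card : ℝ) * n ^ 3 ≤ η / 8 * n * n ^ 3 := by gcongr
    nlinarith
  have hav : ∀ v, η / 2 * n ^ 4 ≤ cnt (fun T => P T ∧ Absorbs H g v T) := by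
    intro v
    have h1 : cnt (Absorbs H g v) ≤ cnt (fun T => P T ∧ Absorbs H g v T) +
        cnt (fun T => ¬ P T) := by
      refine cnt_le_add fun T hT => ?_
      by_cases h : P T
      · exact Or.inl ⟨h, hT⟩
      · exact Or.inr h
    have := habs v
    linarith
  have hsum : ∑ _T : Fin n × Fin n × Fin n × Fin n, η / 2 * ∑ v, w v ≤
      ∑ T : Fin n × Fin n × Fin n × Fin n, ∑ v, if P T ∧ Absorbs H g v T then w v else 0 := by
    rw [Finset.sum_comm]
    have h1 : ∀ v, (∑ T : Fin n × Fin n × Fin n × Fin n,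
        if P T ∧ Absorbs H g v T then w v else 0) = cnt (fun T => P T ∧ Absorbs H g v T) * w v := by
      intro v
      rw [cnt_eq_sum, Finset.sum_mul]
      exact Finset.sum_congr rfl fun T _ => by split_ifs <;> simp
    simp only [h1]
    have h2 : ∑ v, η / 2 * (n : ℝ) ^ 4 * w v ≤
        ∑ v, cnt (fun T => P T ∧ Absorbs H g v T) * w v :=
      Finset.sum_le_sum fun v _ => mul_le_mul_of_nonneg_right (hav v) (hw v).le
    refine le_trans (le_of_eq ?_) h2
    rw [← Finset.mul_sum (Finset.univ : Finset (Fin n)), Finset.sum_const, Finset.card_univ]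
    simp only [Fintype.card_prod, Fintype.card_fin, nsmul_eq_mul]
    push_cast
    ring
  have : Nonempty (Fin n) := ⟨⟨0, hn⟩⟩
  obtain ⟨T, -, hT⟩ := Finset.exists_le_of_sum_le Finset.univ_nonempty hsum
  have hpos : 0 < η / 2 * ∑ v, w v := by
    have : 0 < ∑ v, w v := Finset.sum_pos (fun v _ => hw v) Finset.univ_nonempty
    positivity
  have hne : ∃ v, P T ∧ Absorbs H g v T := by
    by_contra! hc
    have : (∑ v, if P T ∧ Absorbs H g v T then w v else 0) = 0 :=
      Finset.sum_eq_zero fun v _ => if_neg fun h => hc v h.1 h.2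
    linarith
  obtain ⟨v, hPT, hv⟩ := hne
  refine ⟨T, hPT, ⟨v, hv⟩, ?_⟩
  simpa [hPT] using hT

lemma Absorbs.isPath (hH : ∀ e ∈ H, e.card = 3) {g : Fin n → Fin n → Prop} {v a b c e : Fin n}
    (h : Absorbs H g v (a, b, c, e)) : IsPath H [a, b, c, e] a b c e := by
  obtain ⟨⟨h1, h2, -, -, -⟩, h3, -, -⟩ := h
  refine ⟨?_, ⟨h1, h2, trivial⟩, ⟨_, rfl⟩, ⟨[a, b], rfl⟩⟩
  have := h1.ne hH
  have := h2.ne hH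
  simp only [List.nodup_cons, List.mem_cons, List.not_mem_nil, or_false, not_or,
    List.nodup_nil, and_true, not_false_eq_true]
  tauto

/-- A derandomised construction of the absorbing path. The weight of a vertex is halved whenever an
absorber for it joins the path, so that choosing in each step a quadruple that absorbs a positive proportion
of the total weight makes the total weight decay exponentially. -/
lemma absorbing_path {γ η θ : ℝ} (hH : ∀ e ∈ H, e.card = 3) (hcon : Connected H γ)
    {g : Fin n → Fin n → Prop} [∀ v, DecidablePred (Absorbs H g v)]
    (hg : ∀ x y, g x y → 2 * γ * n ^ 2 ≤ extn H ∅ x y)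
    (hη : 0 < η) (hη1 : η ≤ 1) (hn : 0 < n) (habs : ∀ v, η * n ^ 4 ≤ cnt (Absorbs H g v))
    (hstart : ∃ p q, p ≠ q ∧ g p q ∧ g q p) (hθ : θ ≤ η / 8) (hθ' : θ ≤ γ / 2) :
    ∀ i : ℕ, (8 * i + 2 : ℝ) ≤ θ * n → ∃ (L : List (Fin n)) (p q r s : Fin n)
      (F : Finset (Fin n × Fin n × Fin n × Fin n)), IsPath H L p q r s ∧ L.length = 8 * i + 2 ∧
        g q p ∧ g r s ∧ Family L F ∧
        ∑ v, (1 / 2 : ℝ) ^ (F.filter (Absorbs H g v)).card ≤ n * (1 - η / 4) ^ i := by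
  classical
  have hn' : (0 : ℝ) < n := by exact_mod_cast hn
  intro i
  induction i with
  | zero =>
    intro _
    obtain ⟨p, q, hpq, h1, h2⟩ := hstart
    refine ⟨[p, q], p, q, p, q, ∅, ⟨by simpa using hpq, trivial, ⟨[], rfl⟩, ⟨[], rfl⟩⟩, rfl,
      h2, h1, ⟨by simp, by simp⟩, by simp⟩
  | succ i ih =>
    intro hi
    push_cast at hi
    obtain ⟨L, p, q, r, s, F, hL, hlen, hgp, hgr, hF, hW⟩ := ih (by linarith)
    have hlen' : (L.length : ℝ) = 8 * i + 2 := by rw [hlen]; push_cast; ring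
    have hXc : (L.toFinset.card : ℝ) ≤ η / 8 * n := by
      have h1 : (L.toFinset.card : ℝ) ≤ L.length := by exact_mod_cast List.toFinset_card_le L
      have h2 : θ * n ≤ η / 8 * n := by gcongr
      linarith
    obtain ⟨⟨a, b, c, e⟩, hTX, ⟨v₀, hv₀⟩, hT⟩ := choose_quad hη hn habs L.toFinset hXc
      (fun v => (1 / 2 : ℝ) ^ (F.filter (Absorbs H g v)).card) (fun v => by positivity)
    set T : Fin n × Fin n × Fin n × Fin n := (a, b, c, e) with hTdef
    have hB : IsPath H (tl T) a b c e := hv₀.isPath hH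
    have hdis : L.Disjoint (tl T) := fun x h1 h2 => hTX x h2 (List.mem_toFinset.mpr h1)
    have hext : ∀ x y, g x y → γ * n ^ 2 ≤ extn H (L ++ tl T).toFinset x y := by
      intro x y hxy
      refine le_extn_of_add (L := []) (M := L ++ tl T) (hg x y hxy) (by simp) le_rfl ?_
        (fun v hv => Or.inr hv)
      have h1 : ((L ++ tl T).length : ℝ) ≤ γ / 2 * n := by
        rw [List.length_append]
        push_cast
        have h2 : θ * n ≤ γ / 2 * n := by gcongr
        rw [hlen']
        simp only [tl, List.length_cons, List.length_nil]
        push_cast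
        linarith
      nlinarith
    obtain ⟨C, hC, hnew⟩ := hcon.join hL hB hdis (hext _ _ hgr) (hext _ _ hv₀.2.2.1)
    have hTF : T ∉ F := by
      intro h
      obtain ⟨x, y, hxy⟩ := hF.1 T h
      have : a ∈ L := by rw [← hxy]; simp [tl, hTdef]
      exact hdis this (by simp [tl, hTdef])
    have hsubL : ∀ T' ∈ F, ∀ x ∈ tl T', x ∈ L := fun T' hT' x hx =>
      (hF.1 T' hT').subset hx
    refine ⟨_, p, q, c, e, insert T F, hnew, ?_, hgp, hv₀.2.2.2, ⟨?_, ?_⟩, ?_⟩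
    · simp [hlen, hC, tl]; ring
    · intro T' hT'
      rcases Finset.mem_insert.mp hT' with rfl | h
      · exact ⟨L ++ C, [], by simp⟩
      · exact (hF.1 T' h).trans (List.prefix_append _ _).isInfix
    · intro T₁ h₁ T₂ h₂ hne
      rcases Finset.mem_insert.mp h₁ with rfl | h₁ <;> rcases Finset.mem_insert.mp h₂ with rfl | h₂
      · exact absurd rfl hne
      · exact fun x hx hx' => hdis (hsubL _ h₂ x hx') hx
      · exact fun x hx hx' => hdis (hsubL _ h₁ x hx) hx'
      · exact hF.2 _ h₁ _ h₂ hne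
    · have h1 : ∀ v, (1 / 2 : ℝ) ^ ((insert T F).filter (Absorbs H g v)).card =
          (1 / 2 : ℝ) ^ (F.filter (Absorbs H g v)).card -
          1 / 2 * (if Absorbs H g v T then (1 / 2 : ℝ) ^ (F.filter (Absorbs H g v)).card else 0) := by
        intro v
        rw [Finset.filter_insert]
        by_cases h : Absorbs H g v T
        · rw [if_pos h, if_pos h, Finset.card_insert_of_notMem (by simp [hTF]), pow_succ]
          ring
        · rw [if_neg h, if_neg h]
          ring
      rw [Finset.sum_congr rfl fun v _ => h1 v, Finset.sum_sub_distrib, ← Finset.mul_sum]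
      set W := ∑ v, (1 / 2 : ℝ) ^ (F.filter (Absorbs H g v)).card with hWdef
      have h2 : W * (1 - η / 4) ≤ n * (1 - η / 4) ^ i * (1 - η / 4) :=
        mul_le_mul_of_nonneg_right hW (by linarith)
      rw [pow_succ]
      linarith

/-! ### Covering most vertices -/

/-- A tight path both of whose ends have many continuations into the uncovered part can be prolonged
at both ends while keeping this property, as long as linearly many vertices are uncovered. -/
lemma cover {γ κ : ℝ} (hcon : Connected H γ)
    (hpick : ∀ X : Finset (Fin n), κ / 2 * n ≤ n - X.card →
      ∃ z w : Fin n, z ∉ X ∧ w ∉ X ∧ z ≠ w ∧ 3 * γ * n ^ 2 ≤ extn H X z w ∧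
        3 * γ * n ^ 2 ≤ extn H X w z)
    (hκ : 12 ≤ κ * n) (hγ : 24 ≤ γ * n) (k : ℕ) :
    ∀ (L : List (Fin n)) (p q r s : Fin n), n ≤ L.length + k → IsPath H L p q r s →
      2 * γ * n ^ 2 ≤ extn H L.toFinset r s → 2 * γ * n ^ 2 ≤ extn H L.toFinset q p →
      ∃ (L' : List (Fin n)) (p' q' r' s' : Fin n), IsPath H L' p' q' r' s' ∧
        2 * γ * n ^ 2 ≤ extn H L'.toFinset r' s' ∧ 2 * γ * n ^ 2 ≤ extn H L'.toFinset q' p' ∧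
        L <:+: L' ∧ (n : ℝ) - L'.length < κ * n := by
  have hloss : 24 * (n : ℝ) ≤ γ * n ^ 2 := by
    have : (0 : ℝ) ≤ n := by positivity
    nlinarith
  induction k with
  | zero =>
    intro L p q r s hk hL h1 h2
    refine ⟨L, p, q, r, s, hL, h1, h2, List.infix_rfl, ?_⟩
    have : (n : ℝ) ≤ L.length := by exact_mod_cast hk
    linarith
  | succ k ih =>
    intro L p q r s hk hL h1 h2
    by_cases hdone : (n : ℝ) - L.length < κ * n
    · exact ⟨L, p, q, r, s, hL, h1, h2, List.infix_rfl, hdone⟩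
    rw [not_lt] at hdone
    have hn0 : (0 : ℝ) ≤ n := by positivity
    -- prolong at the right end
    have hc1 : (L.toFinset.card : ℝ) ≤ L.length := by exact_mod_cast List.toFinset_card_le L
    obtain ⟨z, w, hz, hw, hzw, e1, e2⟩ := hpick L.toFinset (by linarith)
    rw [List.mem_toFinset] at hz hw
    have hB : IsPath H [z, w] z w z w :=
      ⟨by simpa using hzw, trivial, ⟨[], rfl⟩, ⟨[], rfl⟩⟩
    obtain ⟨C, hC, hL₁⟩ := hcon.join hL hB (by simp [hz, hw])
      (le_extn_of_add (M := [z, w]) (k := 2) h1 subset_rfl (by simp) (by nlinarith)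
        (by intro v hv; simpa using hv))
      (le_extn_of_add (M := [z, w]) (k := 2) e2 subset_rfl (by simp) (by nlinarith)
        (by intro v hv; simpa using hv))
    set L₁ := L ++ (C ++ [z, w]) with hL₁def
    have hlen₁ : L₁.length = L.length + 6 := by simp [hL₁def, hC]
    -- prolong at the left end
    have hc2 : (L₁.toFinset.card : ℝ) ≤ L.length + 6 := by
      have := List.toFinset_card_le L₁
      rw [hlen₁] at this
      exact_mod_cast this
    obtain ⟨z', w', hz', hw', hzw', e1', e2'⟩ := hpick L₁.toFinset (by linarith)
    rw [List.mem_toFinset] at hz' hw'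
    have hB' : IsPath H [z', w'] z' w' z' w' :=
      ⟨by simpa using hzw', trivial, ⟨[], rfl⟩, ⟨[], rfl⟩⟩
    obtain ⟨C', hC', hL₂⟩ := hcon.join hB' hL₁ (by simp [hz', hw'])
      (le_extn_of_add (M := [z', w']) (k := 2) e1' subset_rfl (by simp) (by nlinarith)
        (by intro v hv; simp at hv ⊢; tauto))
      (le_extn_of_add (L := L) (M := C ++ [z, w] ++ [z', w']) (k := 8) h2 subset_rfl
        (by simp [hC]) (by nlinarith)
        (by intro v hv; simp [hL₁def] at hv ⊢; tauto))
    obtain ⟨L', p', q', r', s', hL', f1, f2, hinf, hfin⟩ := ih _ z' w' z w (by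
        simp only [List.length_append, List.length_cons, List.length_nil, hC', hlen₁]; omega) hL₂
      (le_extn_of_add (M := C ++ [z, w] ++ ([z', w'] ++ C')) (k := 12) e1 subset_rfl
        (by simp [hC, hC']) (by nlinarith)
        (by intro v hv; simp [hL₁def] at hv ⊢; tauto))
      (le_extn_of_add (M := [z', w'] ++ C') (k := 6) e2' subset_rfl
        (by simp [hC']) (by nlinarith)
        (by intro v hv; simp at hv ⊢; tauto))
    refine ⟨L', p', q', r', s', hL', f1, f2, List.IsInfix.trans ?_ hinf, hfin⟩
    exact ⟨[z', w'] ++ C', C ++ [z, w], by simp [hL₁def]⟩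

end Paths

lemma eventually_lt_two_pow {κ : ℝ} (hκ : 0 < κ) :
    ∃ s₀ : ℕ, ∀ s : ℕ, s₀ ≤ s → (s : ℝ) < κ * 2 ^ s := by
  have h := tendsto_pow_const_div_const_pow_of_one_lt 1 (r := (2 : ℝ)) (by norm_num)
  obtain ⟨s₀, hs₀⟩ := Filter.eventually_atTop.mp (h.eventually (gt_mem_nhds hκ))
  refine ⟨s₀, fun s hs => ?_⟩
  have := hs₀ s hs
  rw [pow_one, div_lt_iff₀ (by positivity)] at this
  exact this

open Classical in
/-- A path carrying at least `s ≥ κn` disjoint absorbers for every vertex, with both end pairs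
good, yields a tight Hamilton cycle: prolong it until fewer than `κn` vertices are left, close it,
and absorb the rest. -/
lemma hamCycle_of_absorbing_path {n s : ℕ} {H : Finset (Finset (Fin n))}
    {g : Fin n → Fin n → Prop} {γ γ' κ : ℝ} {L : List (Fin n)} {p q r t : Fin n}
    {F : Finset (Fin n × Fin n × Fin n × Fin n)}
    (hcon : Connected H γ')
    (hpick : ∀ X : Finset (Fin n), κ / 2 * n ≤ n - X.card →
      ∃ z w : Fin n, z ∉ X ∧ w ∉ X ∧ z ≠ w ∧ 3 * γ' * n ^ 2 ≤ extn H X z w ∧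
        3 * γ' * n ^ 2 ≤ extn H X w z)
    (hκ : 12 ≤ κ * n) (hγn' : 24 ≤ γ' * n) (hγγ' : 2 * γ' ≤ γ)
    (hg : ∀ x y, g x y → 2 * γ * n ^ 2 ≤ extn H ∅ x y)
    (hL : IsPath H L p q r t) (hlen' : (L.length : ℝ) ≤ γ / 2 * n) (hgp : g q p) (hgr : g r t)
    (hF : Family L F) (hs : κ * n ≤ s) (hcount : ∀ v, s ≤ (F.filter (Absorbs H g v)).card) :
    HasTightHamCycle n H := by
  have hend : ∀ x y, g x y → 2 * γ' * n ^ 2 ≤ extn H L.toFinset x y := by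
    intro x y hxy
    refine le_extn_of_add (L := []) (M := L) (hg _ _ hxy) (by simp) hlen' ?_ (fun v hv => Or.inr hv)
    have : 2 * γ' * n ^ 2 ≤ γ * n ^ 2 := by gcongr
    nlinarith
  obtain ⟨L', p', q', r', t', hL', h1, h2, hinf, hleft⟩ :=
    cover hcon hpick hκ hγn' n L p q r t (by omega) hL
      (hend _ _ hgr) (hend _ _ hgp)
  have hγn : γ' * n ^ 2 ≤ 2 * γ' * n ^ 2 := by
    have : (0 : ℝ) ≤ n := by positivity
    nlinarith
  obtain ⟨C, hC4, hcyc⟩ := hcon.close hL' (hγn.trans h1) (hγn.trans h2)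
  have hle : (L' ++ C).length ≤ n := by simpa using hcyc.1.length_le_card
  refine absorb_all (g := g) (n - (L' ++ C).length) (L' ++ C) F hcyc ⟨?_, hF.2⟩ (by omega) ?_
  · intro T hT
    exact ((hF.1 T hT).trans hinf).trans (List.prefix_append _ _).isInfix
  · intro v _
    refine le_trans ?_ (hcount v)
    have h3 : n ≤ L'.length + s := by
      have : (n : ℝ) ≤ L'.length + s := by linarith
      exact_mod_cast this
    rw [List.length_append]
    omega

end CherryHam

open CherryHam in

/-- For every `α, d ∈ (0,1]` there exist `n₀` and `ρ > 0` such that for all `n ≥ n₀`,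
every `n`-vertex `(ρ,d)`-cherry-dense 3-graph `H` with `δ₁(H) ≥ α·C(n,2)` has a tight
Hamilton cycle. -/
theorem stmt_0 (α d : ℝ) (hα : 0 < α) (hα1 : α ≤ 1) (hd : 0 < d) (hd1 : d ≤ 1) :
    ∃ (n₀ : ℕ) (ρ : ℝ), 0 < ρ ∧
      ∀ n : ℕ, n₀ ≤ n → ∀ H : Finset (Finset (Fin n)),
        (∀ e ∈ H, e.card = 3) →
        CherryDense n H ρ d →
        (∀ v : Fin n, α * (n.choose 2 : ℝ) ≤ (vdeg n H v : ℝ)) →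
        HasTightHamCycle n H := by
  classical
  -- `η n⁴` absorbers per vertex, `γ n²` continuations for connections along the absorbing path,
  -- whose length is at most `θ n`
  obtain ⟨η, hη_def⟩ : ∃ x : ℝ, x = α / 16 * (d * (α / 64) / 2) ^ 2 := ⟨_, rfl⟩
  have hη : 0 < η := by rw [hη_def]; positivity
  have hη1 : η ≤ 1 := by
    rw [hη_def]
    have h1 : d * (α / 64) / 2 ≤ 1 := by nlinarith
    have h2 : (d * (α / 64) / 2) ^ 2 ≤ 1 := pow_le_one₀ (by positivity) h1
    have h3 : α / 16 * (d * (α / 64) / 2) ^ 2 ≤ 1 / 16 * 1 := by gcongr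
    linarith
  obtain ⟨γ, hγ_def⟩ : ∃ x : ℝ, x = d ^ 2 / 16 := ⟨_, rfl⟩
  have hγ : 0 < γ := by rw [hγ_def]; positivity
  obtain ⟨θ, hθ_def⟩ : ∃ x : ℝ, x = min (η / 8) (γ / 2) := ⟨_, rfl⟩
  have hθ : 0 < θ := hθ_def ▸ lt_min (by positivity) (by positivity)
  have hθη : θ ≤ η / 8 := hθ_def ▸ min_le_left _ _
  have hθγ : θ ≤ γ / 2 := hθ_def ▸ min_le_right _ _
  have hθ1 : θ ≤ 1 := hθη.trans (by linarith)
  -- `K` steps of the weight argument reduce the total weight to less than a quarter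
  obtain ⟨K, hK⟩ := exists_pow_lt_of_lt_one (show (0 : ℝ) < 1 / 4 by norm_num)
    (show 1 - η / 4 < 1 by linarith)
  obtain ⟨κ, hκ_def⟩ : ∃ x : ℝ, x = θ / (16 * (K + 1)) := ⟨_, rfl⟩
  have hκ : 0 < κ := by rw [hκ_def]; positivity
  have hκK : κ * (16 * (K + 1)) = θ := by rw [hκ_def]; field_simp
  have hκ1 : κ ≤ 1 := by
    have : (0 : ℝ) ≤ K := by positivity
    nlinarith
  obtain ⟨γ', hγ'_def⟩ : ∃ x : ℝ, x = d ^ 2 * (κ / 2) ^ 2 / 24 := ⟨_, rfl⟩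
  have hγ' : 0 < γ' := by rw [hγ'_def]; positivity
  have hγγ' : 2 * γ' ≤ γ := by
    have : κ ^ 2 ≤ 1 := pow_le_one₀ hκ.le hκ1
    have : d ^ 2 * κ ^ 2 ≤ d ^ 2 * 1 := by gcongr
    rw [hγ'_def, hγ_def]
    nlinarith [sq_nonneg d]
  obtain ⟨s₀, hs₀⟩ := eventually_lt_two_pow hκ
  obtain ⟨ρ₁, hρ₁, H₁⟩ := most_good hd one_pos (show 0 < α / 64 by positivity)
  obtain ⟨n₂, ρ₂, hρ₂, H₂⟩ := connect hd hγ
  obtain ⟨n₃, ρ₃, hρ₃, H₃⟩ := connect hd hγ'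
  obtain ⟨n₄, ρ₄, hρ₄, H₄⟩ := abs_count hα hd
  obtain ⟨n₅, ρ₅, hρ₅, H₅⟩ := pick hd one_pos
  obtain ⟨n₆, ρ₆, hρ₆, H₆⟩ := pick hd (half_pos hκ)
  obtain ⟨n₇, hn₇⟩ := exists_nat_gt ((s₀ + 12) / κ)
  obtain ⟨n₈, hn₈⟩ := exists_nat_gt (24 / γ')
  obtain ⟨n₉, hn₉⟩ := exists_nat_gt (2 * (8 * K + 10) / θ)
  refine ⟨n₂ + n₃ + n₄ + n₅ + n₆ + n₇ + n₈ + n₉ + 1,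
    min ρ₁ (min ρ₂ (min ρ₃ (min ρ₄ (min ρ₅ ρ₆)))), by positivity, ?_⟩
  intro n hn H hH hC hdeg
  have hC₁ : CherryDense n H ρ₁ d := cherryDense_mono (by simp) hC
  have hC₂ : CherryDense n H ρ₂ d := cherryDense_mono (by simp) hC
  have hC₃ : CherryDense n H ρ₃ d := cherryDense_mono (by simp) hC
  have hC₄ : CherryDense n H ρ₄ d := cherryDense_mono (by simp) hC
  have hC₅ : CherryDense n H ρ₅ d := cherryDense_mono (by simp) hC
  have hC₆ : CherryDense n H ρ₆ d := cherryDense_mono (by simp) hC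
  have hn0 : 0 < n := by omega
  have hn' : (0 : ℝ) < n := by exact_mod_cast hn0
  have hbig₁ : s₀ + 12 ≤ κ * n := by
    have : (s₀ + 12) / κ < n := hn₇.trans (by exact_mod_cast (show n₇ < n by omega))
    rw [div_lt_iff₀ hκ] at this
    linarith
  have hbig₂ : 24 ≤ γ' * n := by
    have : 24 / γ' < n := hn₈.trans (by exact_mod_cast (show n₈ < n by omega))
    rw [div_lt_iff₀ hγ'] at this
    linarith
  have hbig₃ : 2 * (8 * K + 10) ≤ θ * n := by
    have : 2 * (8 * K + 10) / θ < n := hn₉.trans (by exact_mod_cast (show n₉ < n by omega))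
    rw [div_lt_iff₀ hθ] at this
    linarith
  -- pairs with the largest guaranteed number of continuations in the whole vertex set
  set g : Fin n → Fin n → Prop := fun x y => 2 * γ * n ^ 2 ≤ extn H ∅ x y with hg_def
  have h2γ : d ^ 2 * 1 ^ 2 / 8 = 2 * γ := by rw [hγ_def]; ring
  have hgbad : cnt (fun p : Fin n × Fin n => ¬ g p.1 p.2) ≤ α / 64 * n ^ 2 := by
    have := H₁ n H hC₁ ∅ (by simp)
    rw [h2γ] at this
    refine le_trans (cnt_mono ?_) this
    intro p hp
    exact not_le.mp hp
  have habs : ∀ v, η * n ^ 4 ≤ cnt (Absorbs H g v) := fun v => by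
    rw [hη_def]
    exact H₄ n (by omega) H hH hC₄ g hgbad v (hdeg v)
  have hstart : ∃ p q, p ≠ q ∧ g p q ∧ g q p := by
    obtain ⟨p, q, -, -, hpq, h1, h2⟩ := H₅ n (by omega) H hC₅ ∅ (by simp)
    rw [h2γ] at h1 h2
    exact ⟨p, q, hpq, h1, h2⟩
  obtain ⟨s, hs_def⟩ : ∃ s : ℕ, s = ⌈κ * n⌉₊ := ⟨_, rfl⟩
  have hs1 : κ * n ≤ s := hs_def ▸ Nat.le_ceil _
  have hs2 : (s : ℝ) < κ * n + 1 := hs_def ▸ Nat.ceil_lt_add_one (by positivity)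
  have hKs : (8 * ((K * s : ℕ) : ℝ) + 2) ≤ θ * n := by
    have hK0 : (0 : ℝ) ≤ K := by positivity
    have h1 : (K : ℝ) * s ≤ K * (κ * n + 1) := by gcongr
    have h2 : 16 * (K * (κ * n)) ≤ θ * n := by
      rw [← hκK]
      have : 0 ≤ κ * n := by positivity
      nlinarith
    push_cast
    linarith
  obtain ⟨L, p, q, r, t, F, hL, hlen, hgp, hgr, hF, hW⟩ :=
    absorbing_path hH (H₂ n (by omega) H hH hC₂) (fun _ _ h => h) hη hη1 hn0 habs hstart
      hθη hθγ (K * s) hKs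
  -- every vertex has at least `s` absorbers on the path
  have hcount : ∀ v, s ≤ (F.filter (Absorbs H g v)).card := by
    intro v
    by_contra! hlt
    have h1 : (1 / 2 : ℝ) ^ (F.filter (Absorbs H g v)).card ≤ n * (1 - η / 4) ^ (K * s) :=
      (Finset.single_le_sum
        (f := fun v => (1 / 2 : ℝ) ^ (F.filter (Absorbs H g v)).card)
        (fun i _ => by positivity) (Finset.mem_univ v)).trans hW
    have h2 : (1 / 2 : ℝ) ^ s ≤ (1 / 2 : ℝ) ^ (F.filter (Absorbs H g v)).card :=
      pow_le_pow_of_le_one (by norm_num) (by norm_num) hlt.le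
    have h3 : (1 - η / 4) ^ (K * s) ≤ (1 / 4 : ℝ) ^ s := by
      rw [pow_mul]
      exact pow_le_pow_left₀ (pow_nonneg (by linarith) _) hK.le _
    have h4 : (n : ℝ) < 2 ^ s := by
      have h5 := hs₀ s (by
        have : (s₀ : ℝ) ≤ s := by linarith
        exact_mod_cast this)
      have : κ * n < κ * 2 ^ s := by linarith
      exact lt_of_mul_lt_mul_left this hκ.le
    have h6 : (n : ℝ) * (1 / 4 : ℝ) ^ s < 2 ^ s * (1 / 4 : ℝ) ^ s := by gcongr
    have h7 : (2 : ℝ) ^ s * (1 / 4 : ℝ) ^ s = (1 / 2) ^ s := by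
      rw [← mul_pow]; norm_num
    have h8 : (n : ℝ) * (1 - η / 4) ^ (K * s) ≤ n * (1 / 4 : ℝ) ^ s := by gcongr
    linarith
  have hlen' : (L.length : ℝ) ≤ γ / 2 * n := by
    rw [hlen]
    have : θ * n ≤ γ / 2 * n := by
      gcongr
    push_cast at hKs ⊢
    linarith
  have hpick : ∀ X : Finset (Fin n), κ / 2 * n ≤ n - X.card →
      ∃ z w : Fin n, z ∉ X ∧ w ∉ X ∧ z ≠ w ∧ 3 * γ' * n ^ 2 ≤ extn H X z w ∧
        3 * γ' * n ^ 2 ≤ extn H X w z := by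
    intro X hX
    have h3γ : d ^ 2 * (κ / 2) ^ 2 / 8 = 3 * γ' := by rw [hγ'_def]; ring
    rw [← h3γ]
    exact H₆ n (by omega) H hC₆ X hX
  exact hamCycle_of_absorbing_path (H₃ n (by omega) H hH hC₃) hpick
    (by linarith [(Nat.cast_nonneg s₀ : (0 : ℝ) ≤ s₀)]) hbig₂ hγγ' (fun _ _ h => h) hL hlen'
    hgp hgr hF hs1 hcount
end

section
/- For every α, d ∈ (0,1], there exist ρ > 0 and c > 0 such that the following holds for any sufficiently large integer n: if H is an n-vertex (ρ,d)-cherry-dense 3-graph satisfying δ₁(H) ≥ α·C(n,2) and v ∈ V(H), then there are at least c·n⁴ v-absorbers in H. -/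
/-!
Fix `v` and let `L` be its link, the set of ordered pairs `(x, y)` with `{v, x, y} ∈ H`; the
degree condition gives `|L| ≥ α n² / 4`. For `(y, z) ∈ L` let `f(y, z)` be the number of `x` with
`(x, y) ∈ L` and `{x, y, z} ∈ H`. Up to the degenerate choices `x = w`, the number of absorbers
`(x, y, z, w)` is the sum of `f(y, z) f(z, y)` over `(y, z) ∈ L`, so it suffices that
`f(y, z)` and `f(z, y)` are both at least `ρ n` for a positive proportion of `L`.

Let `B` be the set of pairs in `L` with `f ≤ ρ n`. Since `L` is symmetric and contains `B`,
Cauchy–Schwarz gives `|P₂(L, B)| ≥ |B|² / n` (`sq_card_le_mul_cherries`). On the other hand at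
most `ρ n |B|` of these cherries span edges (`cherries_le_sum`), so cherry-density forces
`d |B|² / n ≤ ρ n |B| + ρ n³ ≤ 2 ρ n³`. For `ρ = d α² / 512` this says `|B| ≤ α n² / 16`.
Discarding `B` and its reversal from `L` leaves at least `α n² / 8` pairs.
-/

open Finset

/-- `(x,y,z,w)` is a `v`-absorber: `v,x,y,z,w` are pairwise distinct and
`{x,y,z}, {y,z,w}, {v,x,y}, {v,y,z}, {v,z,w}` are all edges of `H`. -/
def IsAbsorber (n : ℕ) (H : Finset (Finset (Fin n))) (v x y z w : Fin n) : Prop :=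
  ([v, x, y, z, w] : List (Fin n)).Nodup ∧
    ({x, y, z} : Finset (Fin n)) ∈ H ∧ ({y, z, w} : Finset (Fin n)) ∈ H ∧
    ({v, x, y} : Finset (Fin n)) ∈ H ∧ ({v, y, z} : Finset (Fin n)) ∈ H ∧
    ({v, z, w} : Finset (Fin n)) ∈ H

instance (n : ℕ) (H : Finset (Finset (Fin n))) (v x y z w : Fin n) :
    Decidable (IsAbsorber n H v x y z w) := by
  unfold IsAbsorber; infer_instance

/-- The link of `v`, as a symmetric set of ordered pairs. -/
def linkPairs (n : ℕ) (H : Finset (Finset (Fin n))) (v : Fin n) : Finset (Fin n × Fin n) :=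
  univ.filter fun p => ({v, p.1, p.2} : Finset (Fin n)) ∈ H

/-- The vertices `x` extending the ordered pair `p = (y, z)` to a cherry `(x, y, z)` that spans an
edge of `H` and whose first pair `(x, y)` lies in the link of `v`. -/
def extSet (n : ℕ) (H : Finset (Finset (Fin n))) (v : Fin n) (p : Fin n × Fin n) :
    Finset (Fin n) :=
  univ.filter fun x => (x, p.1) ∈ linkPairs n H v ∧ ({x, p.1, p.2} : Finset (Fin n)) ∈ H

lemma mem_linkPairs {n : ℕ} {H : Finset (Finset (Fin n))} {v x y : Fin n} :
    (x, y) ∈ linkPairs n H v ↔ ({v, x, y} : Finset (Fin n)) ∈ H := by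
  simp [linkPairs]

lemma linkPairs_symm {n : ℕ} {H : Finset (Finset (Fin n))} {v x y : Fin n}
    (h : (x, y) ∈ linkPairs n H v) : (y, x) ∈ linkPairs n H v := by
  rw [mem_linkPairs] at *
  rwa [Finset.pair_comm y x]

lemma vdeg_le_card_linkPairs {n : ℕ} {H : Finset (Finset (Fin n))}
    (h3 : ∀ e ∈ H, e.card = 3) (v : Fin n) : vdeg n H v ≤ (linkPairs n H v).card := by
  unfold vdeg
  apply Finset.card_le_card_of_surjOn (fun p => ({v, p.1, p.2} : Finset (Fin n)))
  intro e he
  simp only [coe_filter, Set.mem_ofPred_eq] at he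
  have h2 : (e.erase v).card = 2 := by rw [Finset.card_erase_of_mem he.2, h3 e he.1]
  obtain ⟨a, b, -, hab⟩ := Finset.card_eq_two.mp h2
  have he' : ({v, a, b} : Finset (Fin n)) = e := by
    rw [← hab, Finset.insert_erase he.2]
  exact ⟨(a, b), by simpa [mem_linkPairs, he'] using he.1, he'⟩

lemma distinct_of_mem {n : ℕ} {H : Finset (Finset (Fin n))} (h3 : ∀ e ∈ H, e.card = 3)
    {a b c : Fin n} (h : ({a, b, c} : Finset (Fin n)) ∈ H) : a ≠ b ∧ a ≠ c ∧ b ≠ c := by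
  have := h3 _ h
  refine ⟨?_, ?_, ?_⟩ <;> rintro rfl
  · have := Finset.card_le_two (a := a) (b := c)
    simp_all
  · have := Finset.card_le_two (a := a) (b := b)
    rw [Finset.pair_comm b a] at *
    simp_all
  · have := Finset.card_le_two (a := a) (b := b)
    simp_all

/-- Pairs of pairs in `B` sharing their first vertex embed into the cherries of `(L, B)`, by
reversing one of them; Cauchy–Schwarz counts the former. -/
lemma sq_card_le_mul_cherries {n : ℕ} {H : Finset (Finset (Fin n))} {v : Fin n}
    (B : Finset (Fin n × Fin n)) (hB : B ⊆ linkPairs n H v) :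
    B.card ^ 2 ≤ n * ((univ : Finset (Fin n × Fin n × Fin n)).filter fun t =>
      (t.1, t.2.1) ∈ linkPairs n H v ∧ (t.2.1, t.2.2) ∈ B).card := by
  set b : Fin n → Finset (Fin n) := fun y => univ.filter fun z => (y, z) ∈ B with hb
  have h1 : B.card ≤ ∑ y, (b y).card := by
    rw [← Finset.card_sigma]
    apply Finset.card_le_card_of_injOn (fun p => ⟨p.1, p.2⟩)
    · intro p hp
      simpa [hb] using hp
    · rintro ⟨a, c⟩ - ⟨a', c'⟩ - h
      simpa using h
  have h2 : ∑ y, (b y).card ^ 2 ≤ ((univ : Finset (Fin n × Fin n × Fin n)).filter fun t =>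
      (t.1, t.2.1) ∈ linkPairs n H v ∧ (t.2.1, t.2.2) ∈ B).card := by
    have : ∑ y, (b y).card ^ 2 = (univ.sigma fun y => b y ×ˢ b y).card := by
      rw [Finset.card_sigma]
      simp [sq, Finset.card_product]
    rw [this]
    apply Finset.card_le_card_of_injOn (fun s => (s.2.1, s.1, s.2.2))
    · rintro ⟨y, z', z⟩ hp
      simp only [hb, coe_sigma, Set.mem_sigma_iff, coe_product, Set.mem_prod, mem_coe, mem_filter,
        mem_univ, true_and] at hp
      simp only [mem_coe, mem_filter, mem_univ, true_and]
      exact ⟨linkPairs_symm (hB hp.1), hp.2⟩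
    · rintro ⟨y, z', z⟩ - ⟨y', w', w⟩ - h
      simp only [Prod.mk.injEq] at h
      obtain ⟨rfl, rfl, rfl⟩ := h
      rfl
  have h3 := sq_sum_le_card_mul_sum_sq (s := (univ : Finset (Fin n))) (f := fun y => (b y).card)
  simp only [card_univ, Fintype.card_fin] at h3
  calc B.card ^ 2 ≤ (∑ y, (b y).card) ^ 2 := Nat.pow_le_pow_left h1 2
    _ ≤ _ := h3
    _ ≤ _ := Nat.mul_le_mul_left _ h2

lemma cherries_le_sum {n : ℕ} {H : Finset (Finset (Fin n))} {v : Fin n}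
    (B : Finset (Fin n × Fin n)) :
    (((univ : Finset (Fin n × Fin n × Fin n)).filter fun t =>
      (t.1, t.2.1) ∈ linkPairs n H v ∧ (t.2.1, t.2.2) ∈ B).filter fun t =>
        ({t.1, t.2.1, t.2.2} : Finset (Fin n)) ∈ H).card ≤ ∑ p ∈ B, (extSet n H v p).card := by
  rw [← Finset.card_sigma]
  apply Finset.card_le_card_of_injOn (fun t => ⟨t.2, t.1⟩)
  · rintro ⟨x, y, z⟩ h
    simp only [coe_filter, mem_filter, mem_univ, true_and, Set.mem_ofPred_eq] at h
    simp only [coe_sigma, Set.mem_sigma_iff, mem_coe, extSet, mem_filter, mem_univ, true_and]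
    exact ⟨h.1.2, h.1.1, h.2⟩
  · rintro ⟨x, y, z⟩ - ⟨x', y', z'⟩ - h
    simp at h ⊢
    tauto

lemma mul_card_le_card_filter_ne {n : ℕ} (A B : Finset (Fin n)) :
    A.card * B.card ≤ ((A ×ˢ B).filter fun q => q.1 ≠ q.2).card + n := by
  rw [← Finset.card_product, ← Finset.card_filter_add_card_filter_not (fun q => q.1 ≠ q.2)]
  apply Nat.add_le_add_left
  calc _ ≤ (univ : Finset (Fin n)).card := by
        apply Finset.card_le_card_of_injOn Prod.fst
        · intro _ _
          simp
        · rintro ⟨a, b⟩ h ⟨a', b'⟩ h' e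
          simp at h h' e ⊢
          grind
    _ = n := by simp

/-- Gluing extensions on both sides of a link pair `(y, z)` gives an absorber as soon as the two
extending vertices differ: the edges involved force all other distinctness. -/
lemma sum_le_absorbers {n : ℕ} {H : Finset (Finset (Fin n))} (h3 : ∀ e ∈ H, e.card = 3)
    {v : Fin n} (G : Finset (Fin n × Fin n)) (hG : G ⊆ linkPairs n H v) :
    ∑ p ∈ G, ((extSet n H v p ×ˢ extSet n H v p.swap).filter fun q => q.1 ≠ q.2).card ≤
      ((univ : Finset (Fin n × Fin n × Fin n × Fin n)).filter fun q =>
        IsAbsorber n H v q.1 q.2.1 q.2.2.1 q.2.2.2).card := by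
  rw [← Finset.card_sigma]
  apply Finset.card_le_card_of_injOn (fun s => (s.2.1, s.1.1, s.1.2, s.2.2))
  · rintro ⟨⟨y, z⟩, x, w⟩ h
    simp only [coe_sigma, Set.mem_sigma_iff, mem_coe, extSet, mem_filter, mem_univ, true_and,
      mem_product, Prod.swap] at h
    obtain ⟨hyz, ⟨⟨hxy, hxyz⟩, hwz, hwzy⟩, hxw⟩ := h
    have hyz := mem_linkPairs.mp (hG hyz)
    have hzw := mem_linkPairs.mp (linkPairs_symm hwz)
    rw [mem_linkPairs] at hxy
    have hyzw : ({y, z, w} : Finset (Fin n)) ∈ H := by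
      convert hwzy using 1
      ext; simp; tauto
    have := distinct_of_mem h3 hyz
    have := distinct_of_mem h3 hzw
    have := distinct_of_mem h3 hxy
    have := distinct_of_mem h3 hyzw
    have := distinct_of_mem h3 hxyz
    simp only [mem_coe, mem_filter, mem_univ, true_and]
    refine ⟨?_, hxyz, hyzw, hxy, hyz, hzw⟩
    simp only [List.nodup_cons, List.mem_cons, List.not_mem_nil, List.nodup_nil]
    tauto
  · rintro ⟨⟨y, z⟩, x, w⟩ - ⟨⟨y', z'⟩, x', w'⟩ - h
    simp only [Prod.mk.injEq] at h
    obtain ⟨rfl, rfl, rfl, rfl⟩ := h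
    rfl

/-- In a `(ρ, d)`-cherry-dense 3-graph, any set `B` of link pairs with at most `ρ n` extensions
each is small: `|B|² ≤ (2 ρ / d) n⁴`. -/
lemma card_bad_sq_le {n : ℕ} {H : Finset (Finset (Fin n))} {v : Fin n} {ρ d : ℝ} (hρ : 0 < ρ)
    (hd : 0 < d) (hc : CherryDense n H ρ d) (B : Finset (Fin n × Fin n))
    (hB : B ⊆ linkPairs n H v) (hf : ∀ p ∈ B, ((extSet n H v p).card : ℝ) ≤ ρ * n) :
    d * (B.card : ℝ) ^ 2 ≤ 2 * ρ * (n : ℝ) ^ 4 := by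
  have h1 := hc (linkPairs n H v) B
  have h2 : ((B.card : ℝ)) ^ 2 ≤ n * (((univ : Finset (Fin n × Fin n × Fin n)).filter fun t =>
      (t.1, t.2.1) ∈ linkPairs n H v ∧ (t.2.1, t.2.2) ∈ B).card : ℝ) := by
    exact_mod_cast sq_card_le_mul_cherries B hB
  have h3 := (Nat.cast_le (α := ℝ)).mpr (cherries_le_sum (H := H) (v := v) B)
  have h4 : (∑ p ∈ B, ((extSet n H v p).card : ℝ)) ≤ B.card * (ρ * n) := by
    simpa using Finset.sum_le_card_nsmul B _ _ hf
  have h5 : (B.card : ℝ) ≤ (n : ℝ) ^ 2 := by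
    have := Finset.card_le_univ B
    simp only [Fintype.card_prod, Fintype.card_fin] at this
    rw [sq]
    exact_mod_cast this
  push_cast at h3
  have hn : (0 : ℝ) ≤ n := Nat.cast_nonneg n
  have h6 : (B.card : ℝ) * (ρ * n) ≤ n ^ 2 * (ρ * n) :=
    mul_le_mul_of_nonneg_right h5 (by positivity)
  set P := (((univ : Finset (Fin n × Fin n × Fin n)).filter fun t =>
      (t.1, t.2.1) ∈ linkPairs n H v ∧ (t.2.1, t.2.2) ∈ B).card : ℝ)
  have h7 : d * P ≤ 2 * ρ * (n : ℝ) ^ 3 := by nlinarith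
  calc d * (B.card : ℝ) ^ 2 ≤ d * (n * P) := mul_le_mul_of_nonneg_left h2 hd.le
    _ = n * (d * P) := by ring
    _ ≤ n * (2 * ρ * (n : ℝ) ^ 3) := mul_le_mul_of_nonneg_left h7 hn
    _ = _ := by ring

/-- For every `α, d ∈ (0,1]`, there exist `ρ > 0` and `c > 0` such that for sufficiently
large `n`: every `n`-vertex `(ρ,d)`-cherry-dense 3-graph `H` with `δ₁(H) ≥ α·C(n,2)` has,
for every vertex `v`, at least `c·n⁴` `v`-absorbers. -/
theorem stmt_4 (α d : ℝ) (hα : 0 < α) (hα1 : α ≤ 1) (hd : 0 < d) (hd1 : d ≤ 1) :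
    ∃ (ρ c : ℝ), 0 < ρ ∧ 0 < c ∧ ∃ n₀ : ℕ, ∀ n : ℕ, n₀ ≤ n →
      ∀ H : Finset (Finset (Fin n)),
        (∀ e ∈ H, e.card = 3) →
        CherryDense n H ρ d →
        (∀ u : Fin n, α * (n.choose 2 : ℝ) ≤ (vdeg n H u : ℝ)) →
        ∀ v : Fin n,
          c * (n : ℝ) ^ 4 ≤
            ((((Finset.univ : Finset (Fin n × Fin n × Fin n × Fin n)).filter fun q =>
              IsAbsorber n H v q.1 q.2.1 q.2.2.1 q.2.2.2).card) : ℝ) := by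
  set ρ : ℝ := d * α ^ 2 / 512 with hρdef
  have hρ : 0 < ρ := by positivity
  -- `n ≥ 2 / ρ²` makes the `n` degenerate choices `x = w` at most half of the `ρ² n²` choices.
  obtain ⟨N, hN⟩ := exists_nat_ge (2 / ρ ^ 2)
  refine ⟨ρ, α * ρ ^ 2 / 16, hρ, by positivity, max N 2, ?_⟩
  intro n hn H h3 hc hdeg v
  have hn2 : (2 : ℝ) ≤ n := by exact_mod_cast (le_max_right N 2).trans hn
  have hnN : 2 / ρ ^ 2 ≤ (n : ℝ) := hN.trans (by exact_mod_cast (le_max_left N 2).trans hn)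
  have hL : α / 4 * (n : ℝ) ^ 2 ≤ (linkPairs n H v).card := by
    have h1 : (vdeg n H v : ℝ) ≤ (linkPairs n H v).card := by
      exact_mod_cast vdeg_le_card_linkPairs h3 v
    have h2 := hdeg v
    rw [Nat.cast_choose_two] at h2
    nlinarith [mul_nonneg hα.le (mul_nonneg (by linarith : (0 : ℝ) ≤ n) (sub_nonneg.mpr hn2))]
  set L := linkPairs n H v with hLdef
  set B := L.filter fun p => ((extSet n H v p).card : ℝ) ≤ ρ * n with hBdef
  have hBL : B ⊆ L := Finset.filter_subset _ _
  have hB : (B.card : ℝ) ≤ α / 16 * (n : ℝ) ^ 2 := by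
    have h1 := card_bad_sq_le hρ hd hc B hBL (fun p hp => (Finset.mem_filter.mp hp).2)
    have h2 : d * (B.card : ℝ) ^ 2 ≤ d * (α / 16 * (n : ℝ) ^ 2) ^ 2 := by
      rw [hρdef] at h1
      linarith
    exact le_of_sq_le_sq (le_of_mul_le_mul_left h2 hd) (by positivity)
  set G := L \ (B ∪ B.image Prod.swap) with hGdef
  have hG : α / 8 * (n : ℝ) ^ 2 ≤ G.card := by
    have h1 := Finset.le_card_sdiff (B ∪ B.image Prod.swap) L
    have h2 := Finset.card_union_le B (B.image Prod.swap)
    have h4 := Finset.card_image_le (s := B) (f := Prod.swap)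
    rw [← hGdef] at h1
    have h5 : (L.card : ℝ) ≤ G.card + 2 * B.card := by
      exact_mod_cast (by omega : L.card ≤ G.card + 2 * B.card)
    linarith
  have hterm : ∀ p ∈ G, ρ ^ 2 / 2 * (n : ℝ) ^ 2 ≤
      (((extSet n H v p ×ˢ extSet n H v p.swap).filter fun q => q.1 ≠ q.2).card : ℝ) := by
    intro p hp
    obtain ⟨hpL, hpB⟩ := Finset.mem_sdiff.mp hp
    rw [Finset.mem_union, not_or] at hpB
    have h1 : ρ * n ≤ ((extSet n H v p).card : ℝ) := by
      by_contra! h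
      exact hpB.1 (Finset.mem_filter.mpr ⟨hpL, h.le⟩)
    have h2 : ρ * n ≤ ((extSet n H v p.swap).card : ℝ) := by
      by_contra! h
      exact hpB.2 (Finset.mem_image.mpr
        ⟨p.swap, Finset.mem_filter.mpr ⟨linkPairs_symm hpL, h.le⟩, p.swap_swap⟩)
    have h4 : ((extSet n H v p).card : ℝ) * (extSet n H v p.swap).card ≤
        (((extSet n H v p ×ˢ extSet n H v p.swap).filter fun q => q.1 ≠ q.2).card : ℝ) + n := by
      exact_mod_cast mul_card_le_card_filter_ne _ _
    have h5 : (ρ * n) * (ρ * n) ≤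
        ((extSet n H v p).card : ℝ) * (extSet n H v p.swap).card :=
      mul_le_mul h1 h2 (by positivity) (by positivity)
    have h6 : (n : ℝ) ≤ ρ ^ 2 / 2 * (n : ℝ) ^ 2 := by
      rw [div_le_iff₀ (by positivity)] at hnN
      nlinarith
    nlinarith
  have hsum : (G.card : ℝ) * (ρ ^ 2 / 2 * (n : ℝ) ^ 2) ≤ ∑ p ∈ G,
      (((extSet n H v p ×ˢ extSet n H v p.swap).filter fun q => q.1 ≠ q.2).card : ℝ) := by
    simpa only [nsmul_eq_mul] using Finset.card_nsmul_le_sum G _ _ hterm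
  calc α * ρ ^ 2 / 16 * (n : ℝ) ^ 4
      = α / 8 * (n : ℝ) ^ 2 * (ρ ^ 2 / 2 * (n : ℝ) ^ 2) := by ring
    _ ≤ G.card * (ρ ^ 2 / 2 * (n : ℝ) ^ 2) := mul_le_mul_of_nonneg_right hG (by positivity)
    _ ≤ _ := hsum
    _ ≤ _ := by exact_mod_cast sum_le_absorbers h3 G Finset.sdiff_subset
end
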